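/- Let g ∈ H^∞. For every p > 0, the closure of the algebra ℂ[B,g] in H^p contains the z-invariant subspace Γ(g)·H^p = {Γ(g)·h : h ∈ H^p}. -/

import Mathlib

/-!
`H^∞` is a module over `{c ∘ B : c ∈ H^∞}` generated by `1, z, …, z^{n-1}`. In these generators
let `M(b)` be the matrix of multiplication by `g` on the functions on the fibre `B⁻¹(b)`, and let
`c(b)` be coordinates of `h ∈ H^∞`. Conjugation with the Vandermonde matrix of the fibre
diagonalises `M(b)`, its eigenvalues being the values of `g` on the fibre. With `b = B(z)` it
follows that the last entry of `adj(g(z) - M(b)) c(b)` is `Γ(g)(z) h(z)` as long as the fibre has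
`n` distinct points, hence everywhere by the identity theorem. So `Γ(g) h` is a polynomial in `g`
and in finitely many functions `c ∘ B` with `c ∈ H^∞`.

Each `c ∘ B` is a limit, in quadratic mean and with a uniform bound, of polynomials in `B`:
approximate `c` by polynomials and use Littlewood subordination, which applies because `B(0) = 0`.
The functions that are such limits of elements of `ℂ[B,g]` form an algebra, which therefore
contains `Γ(g) H^∞`; in particular `Γ(g)` is bounded. For uniformly bounded sequences convergence
in quadratic mean implies convergence in `p`-th mean, and `H^∞` is dense in `H^p`, which gives
`Γ(g) H^p`.

Boundary values are never used. For the density of `H^∞` in `H^p` one finds `W ∈ H²` with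
`|f|^{p/2} ≤ Re W`, and then `f · (k/(k+W))^N` is bounded and close to `f`. The coordinates `c`
are bounded because they come from Lagrange interpolation on fibres, and the fibres near the unit
circle are uniformly separated, `B'` having no zeros on the circle.
-/

open Complex Polynomial MeasureTheory Metric Set Filter Topology
open scoped Classical

noncomputable section

/-- The open unit disk in `ℂ`. -/
def uDisk : Set ℂ := Metric.ball 0 1

/-- The closed unit disk in `ℂ`. -/
def cDisk : Set ℂ := Metric.closedBall 0 1

/-- The finite Blaschke product with zero set `a 0, …, a (n-1)`:
`B(z) = ∏_j (a_j - z)/(1 - conj(a_j)·z)`. -/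
def blaschke {n : ℕ} (a : Fin n → ℂ) (z : ℂ) : ℂ :=
  ∏ j, (a j - z) / (1 - (starRingEnd ℂ) (a j) * z)

/-- The multiset of the `n` solutions (with multiplicity) `φ_0(z) = z, φ_1(z), …, φ_{n-1}(z)`
of `B(w) = B(z)`, realized as the roots of the polynomial equation
`∏_j (a_j - w) = B(z) · ∏_j (1 - conj(a_j)·w)`. -/
def fiberMS {n : ℕ} (a : Fin n → ℂ) (z : ℂ) : Multiset ℂ :=
  ((∏ j, (Polynomial.C (a j) - Polynomial.X)) -
    Polynomial.C (blaschke a z) *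
      ∏ j, (1 - Polynomial.C ((starRingEnd ℂ) (a j)) * Polynomial.X)).roots

/-- `𝒟(f)(z) = ∏_{j=1}^{n-1} (f(z) - f(φ_j(z)))`, where `φ_1(z), …, φ_{n-1}(z)` is the
fiber of `B` over `B(z)` with one copy of `z` removed.  In particular
`calD a id z = ∏_{j=1}^{n-1} (z - φ_j(z))`. -/
def calD {n : ℕ} (a : Fin n → ℂ) (f : ℂ → ℂ) (z : ℂ) : ℂ :=
  (((fiberMS a z).erase z).map (fun w => f z - f w)).prod

/-- `G` is (the holomorphic extension after removing singularities of) `Γ(f) = 𝒟(f)/𝒟`. -/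
def IsGamma {n : ℕ} (a : Fin n → ℂ) (f G : ℂ → ℂ) : Prop :=
  DifferentiableOn ℂ G uDisk ∧ ∀ z ∈ uDisk, G z * calD a id z = calD a f z

/-- `p`-th power integral mean of `f` on the circle of radius `r`. -/
def circMean (p : ℝ) (f : ℂ → ℂ) (r : ℝ) : ℝ :=
  ∫ θ in (0:ℝ)..(2 * Real.pi), ‖f ((r : ℂ) * Complex.exp ((θ : ℂ) * Complex.I))‖ ^ p

/-- The `H^p` norm of `f` (for `0 < p < ∞`). -/
def hpNorm (p : ℝ) (f : ℂ → ℂ) : ℝ :=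
  (sSup {m : ℝ | ∃ r ∈ Set.Ico (0:ℝ) 1, m = circMean p f r}) ^ (1 / p)

/-- Membership in the Hardy space `H^p`, `0 < p < ∞`: holomorphic on the disk with
uniformly bounded integral means. -/
def MemHp (p : ℝ) (f : ℂ → ℂ) : Prop :=
  DifferentiableOn ℂ f uDisk ∧ ∃ C : ℝ, ∀ r ∈ Set.Ico (0:ℝ) 1, circMean p f r ≤ C

/-- Membership in `H^∞`: bounded holomorphic functions on the disk. -/
def MemHinf (f : ℂ → ℂ) : Prop :=
  DifferentiableOn ℂ f uDisk ∧ ∃ C : ℝ, ∀ z ∈ uDisk, ‖f z‖ ≤ C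

/-- The `H^∞` (sup) norm. -/
def hinfNorm (f : ℂ → ℂ) : ℝ := sSup {m : ℝ | ∃ z ∈ uDisk, m = ‖f z‖}

/-- The algebra of all polynomials in the functions `F 0, …, F (m-1)`. -/
def algGen (m : ℕ) (F : Fin m → (ℂ → ℂ)) : Set (ℂ → ℂ) :=
  {h | ∃ P : MvPolynomial (Fin m) ℂ, ∀ z : ℂ, h z = MvPolynomial.eval (fun i => F i z) P}

/-- The algebra `ℂ[F,G]` of all polynomials in the two functions `F` and `G`. -/
def algGen2 (F G : ℂ → ℂ) : Set (ℂ → ℂ) := algGen 2 ![F, G]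

/-- The (sequential) closure of `S` in `H^p`. -/
def hpClosure (p : ℝ) (S : Set (ℂ → ℂ)) : Set (ℂ → ℂ) :=
  {f | MemHp p f ∧ ∃ u : ℕ → (ℂ → ℂ), (∀ k, u k ∈ S) ∧
    Filter.Tendsto (fun k => hpNorm p (fun z => f z - u k z)) Filter.atTop (nhds 0)}

/-- `S` has finite codimension in `H^p`: finitely many functions in `H^p` together with `S`
span all of `H^p`. -/
def FiniteCodimHp (p : ℝ) (S : Set (ℂ → ℂ)) : Prop :=
  ∃ (k : ℕ) (e : Fin k → (ℂ → ℂ)), (∀ i, MemHp p (e i)) ∧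
    ∀ f, MemHp p f → ∃ (c : Fin k → ℂ) (s : ℂ → ℂ), s ∈ S ∧
      ∀ z ∈ uDisk, f z = s z + ∑ i, c i * e i z

/-- Inner function: bounded by 1, holomorphic, radial limits of modulus 1 a.e. -/
def IsInner (f : ℂ → ℂ) : Prop :=
  DifferentiableOn ℂ f uDisk ∧ (∀ z ∈ uDisk, ‖f z‖ ≤ 1) ∧
  ∀ᵐ θ : ℝ ∂volume, ∃ l : ℂ, ‖l‖ = 1 ∧
    Filter.Tendsto (fun r : ℝ => f ((r : ℂ) * Complex.exp ((θ : ℂ) * Complex.I)))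
      (nhdsWithin 1 (Set.Iio 1)) (nhds l)

/-- `J` divides `h`, with a quotient holomorphic on the disk. -/
def InnerDivides (J h : ℂ → ℂ) : Prop :=
  ∃ k : ℂ → ℂ, DifferentiableOn ℂ k uDisk ∧ ∀ z ∈ uDisk, h z = J z * k z

/-- Outer function: a holomorphic function on the disk whose only inner divisors are
unimodular constants (i.e. whose inner part is a unimodular constant). -/
def IsOuter (h : ℂ → ℂ) : Prop :=
  DifferentiableOn ℂ h uDisk ∧
  ∀ J : ℂ → ℂ, IsInner J → InnerDivides J h →
    ∃ c : ℂ, ‖c‖ = 1 ∧ ∀ z ∈ uDisk, J z = c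

/-- `I` is the inner part of `h`: `I` is inner and `h = I·F` with `F` outer. -/
def IsInnerPartOf (I h : ℂ → ℂ) : Prop :=
  IsInner I ∧ ∃ F : ℂ → ℂ, IsOuter F ∧ ∀ z ∈ uDisk, h z = I z * F z

/-- Finite Blaschke product (up to a unimodular constant factor). -/
def IsFiniteBlaschke (f : ℂ → ℂ) : Prop :=
  ∃ (m : ℕ) (c : ℂ) (b : Fin m → ℂ), ‖c‖ = 1 ∧ (∀ i, b i ∈ uDisk) ∧
    ∀ z ∈ uDisk, f z = c * ∏ i, (b i - z) / (1 - (starRingEnd ℂ) (b i) * z)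

/-- `h` has no singular inner factor: every zero-free inner divisor of `h` is a
unimodular constant. -/
def NoSingularInnerFactor (h : ℂ → ℂ) : Prop :=
  ∀ J : ℂ → ℂ, IsInner J → (∀ z ∈ uDisk, J z ≠ 0) → InnerDivides J h →
    ∃ c : ℂ, ‖c‖ = 1 ∧ ∀ z ∈ uDisk, J z = c

/-! ### Power means on circles -/

/-- The normalised mean `(2π)⁻¹ ∫ |f(re^{iθ})|^p dθ`, that is `circMean` without its factor `2π`. -/
def powMean (p : ℝ) (f : ℂ → ℂ) (r : ℝ) : ℝ :=
  Real.circleAverage (fun z => ‖f z‖ ^ p) 0 r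

lemma circMean_eq_two_pi_mul_powMean (p : ℝ) (f : ℂ → ℂ) (r : ℝ) :
    circMean p f r = 2 * Real.pi * powMean p f r := by
  simp only [circMean, powMean, Real.circleAverage_def, circleMap_zero, smul_eq_mul]
  rw [mul_inv_cancel_left₀ Real.two_pi_pos.ne']

lemma zero_mem_uDisk : (0 : ℂ) ∈ uDisk := mem_ball_self one_pos

lemma sphere_subset_uDisk {r : ℝ} (hr : r < 1) : sphere (0 : ℂ) r ⊆ uDisk := fun z hz => by
  rw [uDisk, mem_ball_zero_iff, mem_sphere_zero_iff_norm.1 hz]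
  exact hr

lemma circleAverage_re_eq {f : ℂ → ℂ} {r : ℝ} (hr : 0 ≤ r) (hf : DiffContOnCl ℂ f (ball 0 r)) :
    Real.circleAverage (fun z => (f z).re) 0 r = (f 0).re := by
  have hint : CircleIntegrable f 0 r :=
    (hf.continuousOn_ball.mono sphere_subset_closedBall).circleIntegrable hr
  have hmean : Real.circleAverage f 0 r = f 0 :=
    DiffContOnCl.circleAverage (by rwa [abs_of_nonneg hr])
  rw [← hmean]
  exact Complex.reCLM.circleAverage_comp_comm hint

section PowMean

variable {p q s r a b : ℝ} {f g h : ℂ → ℂ}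

lemma powMean_nonneg (p : ℝ) (f : ℂ → ℂ) (r : ℝ) : 0 ≤ powMean p f r :=
  Real.circleAverage_nonneg_of_nonneg fun _ _ => by positivity

lemma powMean_const (p : ℝ) (c : ℂ) (r : ℝ) : powMean p (fun _ => c) r = ‖c‖ ^ p :=
  Real.circleAverage_const _ _ _

lemma powMean_congr (hr : 0 ≤ r) (hfg : EqOn f g (sphere 0 r)) :
    powMean p f r = powMean p g r :=
  Real.circleAverage_congr_sphere fun z hz => by
    simp only [hfg (by rwa [abs_of_nonneg hr] at hz)]

lemma circleIntegrable_norm_rpow (hp : 0 ≤ p) (hr : 0 ≤ r) (hf : ContinuousOn f (sphere 0 r)) :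
    CircleIntegrable (fun z => ‖f z‖ ^ p) 0 r :=
  (hf.norm.rpow_const fun _ _ => Or.inr hp).circleIntegrable hr

lemma powMean_le_add (hp : 0 ≤ p) (hq : 0 ≤ q) (hs : 0 ≤ s) (hr : 0 ≤ r)
    (hf : ContinuousOn f (sphere 0 r)) (hg : ContinuousOn g (sphere 0 r))
    (hh : ContinuousOn h (sphere 0 r))
    (hle : ∀ z ∈ sphere (0 : ℂ) r, ‖f z‖ ^ p ≤ a * ‖g z‖ ^ q + b * ‖h z‖ ^ s) :
    powMean p f r ≤ a * powMean q g r + b * powMean s h r := by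
  have hgi := (circleIntegrable_norm_rpow hq hr hg).const_smul (a := a)
  have hhi := (circleIntegrable_norm_rpow hs hr hh).const_smul (a := b)
  have hmono := Real.circleAverage_mono (circleIntegrable_norm_rpow hp hr hf) (hgi.add hhi)
    (by rwa [abs_of_nonneg hr])
  rwa [Real.circleAverage_add hgi hhi, Real.circleAverage_smul, Real.circleAverage_smul] at hmono

lemma powMean_le_mul (hp : 0 ≤ p) (hq : 0 ≤ q) (hr : 0 ≤ r)
    (hf : ContinuousOn f (sphere 0 r)) (hg : ContinuousOn g (sphere 0 r))
    (hle : ∀ z ∈ sphere (0 : ℂ) r, ‖f z‖ ^ p ≤ a * ‖g z‖ ^ q) :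
    powMean p f r ≤ a * powMean q g r := by
  simpa using powMean_le_add (b := 0) hp hq hq hr hf hg hg (by simpa using hle)

lemma powMean_le_rpow (hp : 0 ≤ p) (hr : 0 ≤ r) (hf : ContinuousOn f (sphere 0 r))
    (hle : ∀ z ∈ sphere (0 : ℂ) r, ‖f z‖ ≤ a) : powMean p f r ≤ a ^ p :=
  Real.circleAverage_mono_on_of_le_circle (circleIntegrable_norm_rpow hp hr hf) fun z hz =>
    Real.rpow_le_rpow (norm_nonneg _) (hle z (by rwa [abs_of_nonneg hr] at hz)) hp

lemma powMean_two_const_add {c : ℂ} (hr : 0 ≤ r) (hh : DiffContOnCl ℂ h (ball 0 r))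
    (h0 : h 0 = 0) : powMean 2 (fun z => c + h z) r = ‖c‖ ^ 2 + powMean 2 h r := by
  have hcont : ContinuousOn h (sphere 0 r) := hh.continuousOn_ball.mono sphere_subset_closedBall
  have hcross : DiffContOnCl ℂ (fun z => 2 * starRingEnd ℂ c * h z) (ball 0 r) :=
    hh.const_smul (2 * starRingEnd ℂ c)
  have hexpand : (fun z => ‖c + h z‖ ^ (2 : ℝ))
      = (fun _ => ‖c‖ ^ 2) + (fun z => (2 * starRingEnd ℂ c * h z).re)
        + fun z => ‖h z‖ ^ (2 : ℝ) := by
    funext z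
    simp only [Pi.add_apply, Real.rpow_two, ← Complex.normSq_eq_norm_sq, Complex.normSq_apply,
      add_re, add_im, mul_re, mul_im, conj_re, conj_im, re_ofNat, im_ofNat]
    ring
  have hint : CircleIntegrable (fun z => (2 * starRingEnd ℂ c * h z).re) 0 r :=
    (Complex.continuous_re.comp_continuousOn (continuousOn_const.mul hcont)).circleIntegrable hr
  rw [powMean, hexpand, Real.circleAverage_add ((circleIntegrable_const _ _ _).add hint)
      (circleIntegrable_norm_rpow zero_le_two hr hcont),
    Real.circleAverage_add (circleIntegrable_const _ _ _) hint, Real.circleAverage_const,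
    circleAverage_re_eq hr hcross, h0, mul_zero, zero_re, add_zero, powMean]

end PowMean

lemma rpow_eq_sq_rpow_half {x : ℝ} (hx : 0 ≤ x) (p : ℝ) : x ^ p = (x ^ (p / 2)) ^ 2 := by
  rw [← Real.rpow_natCast, ← Real.rpow_mul hx, Nat.cast_ofNat, div_mul_cancel₀ p two_ne_zero]

lemma norm_add_rpow_le {E : Type*} [SeminormedAddCommGroup E] {p : ℝ} (hp : 0 ≤ p) (x y : E) :
    ‖x + y‖ ^ p ≤ 2 ^ p * ‖x‖ ^ p + 2 ^ p * ‖y‖ ^ p := by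
  rw [← Real.mul_rpow zero_le_two (norm_nonneg x), ← Real.mul_rpow zero_le_two (norm_nonneg y)]
  have hx : 0 ≤ (2 * ‖x‖) ^ p := by positivity
  have hy : 0 ≤ (2 * ‖y‖) ^ p := by positivity
  have hadd : ‖x + y‖ ≤ ‖x‖ + ‖y‖ := norm_add_le x y
  rcases le_total ‖x‖ ‖y‖ with h | h
  · linarith [Real.rpow_le_rpow (norm_nonneg _) (by linarith : ‖x + y‖ ≤ 2 * ‖y‖) hp]
  · linarith [Real.rpow_le_rpow (norm_nonneg _) (by linarith : ‖x + y‖ ≤ 2 * ‖x‖) hp]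

/-! ### Null sequences in the Hardy spaces -/

/-- The `p`-th means of `u k` tend to `0` as `k → ∞`, uniformly in the radius. For holomorphic `u k`
this is convergence to `0` in `H^p`; phrasing it with means keeps `p < 1` harmless. -/
def HpNull (p : ℝ) (u : ℕ → ℂ → ℂ) : Prop :=
  ∀ ε > 0, ∀ᶠ k in atTop, ∀ r ∈ Ico (0 : ℝ) 1, powMean p (u k) r ≤ ε

namespace HpNull

variable {p q s a b K : ℝ} {u v w m : ℕ → ℂ → ℂ}

lemma of_tendsto {δ : ℕ → ℝ} (hδ : Tendsto δ atTop (𝓝 0))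
    (hle : ∀ k, ∀ r ∈ Ico (0 : ℝ) 1, powMean p (u k) r ≤ δ k) : HpNull p u := fun ε hε => by
  filter_upwards [hδ.eventually (ge_mem_nhds hε)] with k hk r hr using (hle k r hr).trans hk

lemma congr (hu : HpNull p u) (huv : ∀ k, EqOn (v k) (u k) uDisk) : HpNull p v := fun ε hε => by
  filter_upwards [hu ε hε] with k hk r hr
  rw [powMean_congr hr.1 ((huv k).mono (sphere_subset_uDisk hr.2))]
  exact hk r hr

lemma of_le_add (hp : 0 ≤ p) (hq : 0 ≤ q) (hs : 0 ≤ s) (ha : 0 ≤ a) (hb : 0 ≤ b)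
    (hu : HpNull q u) (hv : HpNull s v) (huc : ∀ k, ContinuousOn (u k) uDisk)
    (hvc : ∀ k, ContinuousOn (v k) uDisk) (hwc : ∀ k, ContinuousOn (w k) uDisk)
    (hle : ∀ k, ∀ z ∈ uDisk, ‖w k z‖ ^ p ≤ a * ‖u k z‖ ^ q + b * ‖v k z‖ ^ s) :
    HpNull p w := fun ε hε => by
  have hpos : 0 < a + b + 1 := by positivity
  filter_upwards [hu (ε / (a + b + 1)) (by positivity), hv (ε / (a + b + 1)) (by positivity)]
    with k huk hvk r hr
  have hsub := sphere_subset_uDisk hr.2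
  calc powMean p (w k) r
      ≤ a * powMean q (u k) r + b * powMean s (v k) r :=
        powMean_le_add hp hq hs hr.1 ((hwc k).mono hsub) ((huc k).mono hsub) ((hvc k).mono hsub)
          fun z hz => hle k z (hsub hz)
    _ ≤ a * (ε / (a + b + 1)) + b * (ε / (a + b + 1)) := by
        gcongr
        exacts [huk r hr, hvk r hr]
    _ = (a + b) * ε / (a + b + 1) := by ring
    _ ≤ ε := by
        rw [div_le_iff₀ hpos]
        nlinarith

lemma add (hp : 0 ≤ p) (hu : HpNull p u) (hv : HpNull p v)
    (huc : ∀ k, ContinuousOn (u k) uDisk) (hvc : ∀ k, ContinuousOn (v k) uDisk) :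
    HpNull p fun k => u k + v k :=
  of_le_add hp hp hp (by positivity) (by positivity) hu hv huc hvc
    (fun k => (huc k).add (hvc k)) fun _ _ _ => norm_add_rpow_le hp _ _

lemma mul (hp : 0 ≤ p) (hu : HpNull p u) (huc : ∀ k, ContinuousOn (u k) uDisk)
    (hmc : ∀ k, ContinuousOn (m k) uDisk) (hm : ∀ k, ∀ z ∈ uDisk, ‖m k z‖ ≤ K) :
    HpNull p fun k => m k * u k := by
  have hK : 0 ≤ K := (norm_nonneg _).trans (hm 0 0 zero_mem_uDisk)
  refine of_le_add (a := K ^ p) (b := 0) hp hp hp (by positivity) le_rfl hu hu huc huc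
    (fun k => (hmc k).mul (huc k)) fun k z hz => ?_
  rw [Pi.mul_apply, norm_mul, Real.mul_rpow (norm_nonneg _) (norm_nonneg _), zero_mul, add_zero]
  gcongr
  exact hm k z hz

end HpNull

lemma rpow_le_rpow_add_mul_sq {p δ K x : ℝ} (hp : 0 ≤ p) (hδ : 0 < δ) (hx : 0 ≤ x) (hxK : x ≤ K) :
    x ^ p ≤ δ ^ p + K ^ p / δ ^ 2 * x ^ 2 := by
  have hK : 0 ≤ K := hx.trans hxK
  rcases le_total x δ with hxδ | hδx
  · exact (Real.rpow_le_rpow hx hxδ hp).trans (le_add_of_nonneg_right (by positivity))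
  · have hratio : 1 ≤ x ^ 2 / δ ^ 2 := by
      rw [one_le_div (by positivity)]
      gcongr
    calc x ^ p ≤ K ^ p * 1 := by rw [mul_one]; exact Real.rpow_le_rpow hx hxK hp
      _ ≤ K ^ p * (x ^ 2 / δ ^ 2) := by gcongr
      _ = K ^ p / δ ^ 2 * x ^ 2 := by ring
      _ ≤ δ ^ p + K ^ p / δ ^ 2 * x ^ 2 := le_add_of_nonneg_left (by positivity)

lemma HpNull.of_two_of_bounded {p K : ℝ} {u : ℕ → ℂ → ℂ} (hp : 0 < p) (hu : HpNull 2 u)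
    (huc : ∀ k, ContinuousOn (u k) uDisk) (hK : ∀ k, ∀ z ∈ uDisk, ‖u k z‖ ≤ K) :
    HpNull p u := fun ε hε => by
  have hK0 : 0 ≤ K := (norm_nonneg _).trans (hK 0 0 zero_mem_uDisk)
  obtain ⟨δ, hδ, hδp⟩ : ∃ δ > 0, δ ^ p = ε / 2 :=
    ⟨(ε / 2) ^ p⁻¹, by positivity, Real.rpow_inv_rpow (by positivity) hp.ne'⟩
  set A := K ^ p / δ ^ 2
  have hA : 0 ≤ A := by positivity
  filter_upwards [hu (ε / (2 * (A + 1))) (by positivity)] with k hk r hr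
  have hcont := (huc k).mono (sphere_subset_uDisk hr.2)
  calc powMean p (u k) r
      ≤ 1 * powMean p (fun _ => (δ : ℂ)) r + A * powMean 2 (u k) r := by
        refine powMean_le_add hp.le hp.le zero_le_two hr.1 hcont continuousOn_const hcont
          fun z hz => ?_
        rw [Complex.norm_real, Real.norm_of_nonneg hδ.le, one_mul, Real.rpow_two]
        exact rpow_le_rpow_add_mul_sq hp.le hδ (norm_nonneg _)
          (hK k z (sphere_subset_uDisk hr.2 hz))
    _ ≤ ε / 2 + A * (ε / (2 * (A + 1))) := by
        rw [powMean_const, Complex.norm_real, Real.norm_of_nonneg hδ.le, one_mul, hδp]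
        gcongr
        exact hk r hr
    _ = ε / 2 + ε / 2 * (A / (A + 1)) := by field_simp
    _ ≤ ε / 2 + ε / 2 * 1 := by
        gcongr
        exact (div_le_one (by positivity)).2 (by linarith)
    _ = ε := by ring

/-! ### Power series and Littlewood subordination -/

/-- The function `z ↦ ∑ c_k z^k`. It takes the junk value `0` where the series diverges, so it is
only used on disks of absolute convergence. -/
def powerSum (c : ℕ → ℂ) (z : ℂ) : ℂ := ∑' k, c k * z ^ k

lemma norm_mul_pow_le {ρ : ℝ} {z : ℂ} (hz : ‖z‖ ≤ ρ) (a : ℂ) (k : ℕ) :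
    ‖a * z ^ k‖ ≤ ‖a‖ * ρ ^ k := by
  rw [norm_mul, norm_pow]
  gcongr

section PowerSum

variable {c : ℕ → ℂ} {ρ : ℝ}

lemma summable_mul_pow (hc : Summable fun k => ‖c k‖ * ρ ^ k) {z : ℂ} (hz : ‖z‖ ≤ ρ) :
    Summable fun k => c k * z ^ k :=
  .of_norm_bounded hc fun k => norm_mul_pow_le hz (c k) k

lemma powerSum_eq_add_mul (hc : Summable fun k => ‖c k‖ * ρ ^ k) {z : ℂ} (hz : ‖z‖ ≤ ρ) :
    powerSum c z = c 0 + z * powerSum (fun k => c (k + 1)) z := by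
  rw [powerSum, (summable_mul_pow hc hz).tsum_eq_zero_add, pow_zero, mul_one, powerSum,
    ← tsum_mul_left]
  congr 1
  exact tsum_congr fun k => by ring

lemma diffContOnCl_powerSum (hc : Summable fun k => ‖c k‖ * ρ ^ k) :
    DiffContOnCl ℂ (powerSum c) (ball 0 ρ) where
  differentiableOn := differentiableOn_tsum_of_summable_norm hc (fun k => by fun_prop) isOpen_ball
    fun k _ hz => norm_mul_pow_le (mem_ball_zero_iff.1 hz).le (c k) k
  continuousOn :=
    (continuousOn_tsum (fun k => by fun_prop) hc fun k _ hz =>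
      norm_mul_pow_le (mem_closedBall_zero_iff.1 hz) (c k) k).mono closure_ball_subset_closedBall

lemma summable_shift (hρ : 0 < ρ) (hc : Summable fun k => ‖c k‖ * ρ ^ k) :
    Summable fun k => ‖c (k + 1)‖ * ρ ^ k := by
  refine (((summable_nat_add_iff 1).2 hc).mul_right ρ⁻¹).congr fun k => ?_
  rw [pow_succ]
  field_simp

lemma powMean_two_powerSum (hρ : 0 < ρ) (hc : Summable fun k => ‖c k‖ * ρ ^ k) :
    powMean 2 (powerSum c) ρ
      = ‖c 0‖ ^ 2 + ρ ^ 2 * powMean 2 (powerSum fun k => c (k + 1)) ρ := by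
  have htail := diffContOnCl_powerSum (summable_shift hρ hc)
  have hsplit : EqOn (powerSum c) (fun z => c 0 + z * powerSum (fun k => c (k + 1)) z)
      (sphere 0 ρ) := fun z hz => powerSum_eq_add_mul hc (mem_sphere_zero_iff_norm.1 hz).le
  rw [powMean_congr hρ.le hsplit,
    powMean_two_const_add (h := fun z => z * powerSum (fun k => c (k + 1)) z) hρ.le
      (differentiable_id.diffContOnCl.smul htail) (zero_mul _)]
  congr 1
  rw [powMean, powMean, ← smul_eq_mul, ← Real.circleAverage_smul]
  refine Real.circleAverage_congr_sphere fun z hz => ?_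
  rw [abs_of_pos hρ, mem_sphere_zero_iff_norm] at hz
  simp only [norm_mul, hz, mul_pow, Real.rpow_two, smul_eq_mul, Pi.smul_apply]

lemma sum_sq_le_powMean_powerSum (hρ : 0 < ρ) (hc : Summable fun k => ‖c k‖ * ρ ^ k) (N : ℕ) :
    ∑ k ∈ Finset.range N, ‖c k‖ ^ 2 * (ρ ^ 2) ^ k ≤ powMean 2 (powerSum c) ρ := by
  induction N generalizing c with
  | zero => simpa using powMean_nonneg 2 (powerSum c) ρ
  | succ N ih =>
    calc ∑ k ∈ Finset.range (N + 1), ‖c k‖ ^ 2 * (ρ ^ 2) ^ k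
        = ‖c 0‖ ^ 2 + ρ ^ 2 * ∑ k ∈ Finset.range N, ‖c (k + 1)‖ ^ 2 * (ρ ^ 2) ^ k := by
          rw [Finset.sum_range_succ', add_comm, Finset.mul_sum]
          simp only [pow_zero, mul_one, pow_succ, mul_assoc, mul_comm]
      _ ≤ ‖c 0‖ ^ 2 + ρ ^ 2 * powMean 2 (powerSum fun k => c (k + 1)) ρ := by
          gcongr
          exact ih (summable_shift hρ hc)
      _ = powMean 2 (powerSum c) ρ := (powMean_two_powerSum hρ hc).symm

lemma summable_mul_pow_of_bounded {K : ℝ} (hK : ∀ k, ‖c k‖ ≤ K) (hρ0 : 0 ≤ ρ) (hρ1 : ρ < 1) :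
    Summable fun k => ‖c k‖ * ρ ^ k :=
  .of_nonneg_of_le (fun k => by positivity)
    (fun k => mul_le_mul_of_nonneg_right (hK k) (pow_nonneg hρ0 k))
    ((summable_geometric_of_lt_one hρ0 hρ1).mul_left K)

lemma differentiableOn_powerSum {K : ℝ} (hK : ∀ k, ‖c k‖ ≤ K) :
    DifferentiableOn ℂ (powerSum c) uDisk := fun z hz => by
  obtain ⟨ρ, hzρ, hρ⟩ := exists_between (mem_ball_zero_iff.1 hz)
  have hdiff := (diffContOnCl_powerSum
    (summable_mul_pow_of_bounded hK ((norm_nonneg z).trans hzρ.le) hρ)).differentiableOn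
  exact (hdiff.differentiableAt
    (isOpen_ball.mem_nhds (mem_ball_zero_iff.2 hzρ))).differentiableWithinAt

lemma norm_powerSum_le {K : ℝ} (hK : ∀ k, ‖c k‖ ≤ K) {z : ℂ} (hz : ‖z‖ ≤ ρ) (hρ : ρ < 1) :
    ‖powerSum c z‖ ≤ K * (1 - ρ)⁻¹ := by
  have hρ0 : 0 ≤ ρ := (norm_nonneg z).trans hz
  refine tsum_of_norm_bounded ((hasSum_geometric_of_lt_one hρ0 hρ).mul_left K) fun k => ?_
  exact (norm_mul_pow_le hz (c k) k).trans
    (mul_le_mul_of_nonneg_right (hK k) (pow_nonneg hρ0 k))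

lemma exists_norm_le_of_summable_sq (hc : Summable fun k => ‖c k‖ ^ 2) : ∃ K, ∀ k, ‖c k‖ ≤ K :=
  ⟨√(∑' k, ‖c k‖ ^ 2), fun k =>
    Real.le_sqrt_of_sq_le (hc.le_tsum k fun _ _ => by positivity)⟩

end PowerSum

section Littlewood

variable {c : ℕ → ℂ} {φ : ℂ → ℂ}

lemma norm_le_norm_of_mapsTo_uDisk (hφ : DifferentiableOn ℂ φ uDisk) (hmaps : MapsTo φ uDisk uDisk)
    (h0 : φ 0 = 0) {z : ℂ} (hz : z ∈ uDisk) : ‖φ z‖ ≤ ‖z‖ :=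
  Complex.norm_le_norm_of_mapsTo_ball hφ (hmaps.mono_right ball_subset_closedBall) h0
    (mem_ball_zero_iff.1 hz)

/-- The Schwarz bound `‖φ z‖ ≤ ‖z‖` lets one coefficient be split off at a time. -/
lemma powMean_two_powerSum_comp_le_add {K r : ℝ} (hK : ∀ k, ‖c k‖ ≤ K)
    (hφ : DifferentiableOn ℂ φ uDisk) (hmaps : MapsTo φ uDisk uDisk) (h0 : φ 0 = 0)
    (hr : r ∈ Ico (0 : ℝ) 1) :
    powMean 2 (fun z => powerSum c (φ z)) r
      ≤ ‖c 0‖ ^ 2 + r ^ 2 * powMean 2 (fun z => powerSum (fun k => c (k + 1)) (φ z)) r := by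
  have hφr : ∀ z ∈ sphere (0 : ℂ) r, ‖φ z‖ ≤ r := fun z hz =>
    (norm_le_norm_of_mapsTo_uDisk hφ hmaps h0 (sphere_subset_uDisk hr.2 hz)).trans_eq
      (mem_sphere_zero_iff_norm.1 hz)
  have htail : DifferentiableOn ℂ (fun z => powerSum (fun k => c (k + 1)) (φ z)) uDisk :=
    (differentiableOn_powerSum fun k => hK (k + 1)).comp hφ hmaps
  have hrest := (hφ.mul htail).diffContOnCl_ball (closedBall_subset_ball hr.2)
  have hsplit : EqOn (fun z => powerSum c (φ z))
      (fun z => c 0 + φ z * powerSum (fun k => c (k + 1)) (φ z)) (sphere 0 r) := fun z hz =>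
    powerSum_eq_add_mul (summable_mul_pow_of_bounded hK hr.1 hr.2) (hφr z hz)
  rw [powMean_congr hr.1 hsplit,
    powMean_two_const_add (h := fun z => φ z * powerSum (fun k => c (k + 1)) (φ z)) hr.1 hrest
      (by simp only [h0, zero_mul])]
  gcongr
  have hsub := sphere_subset_uDisk hr.2
  refine powMean_le_mul zero_le_two zero_le_two hr.1 ((hφ.mul htail).continuousOn.mono hsub)
    (htail.continuousOn.mono hsub) fun z hz => ?_
  rw [norm_mul, Real.rpow_two, Real.rpow_two, mul_pow]
  gcongr
  exact hφr z hz

lemma powMean_two_powerSum_comp_le_sum {K r : ℝ} (hK : ∀ k, ‖c k‖ ≤ K)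
    (hφ : DifferentiableOn ℂ φ uDisk) (hmaps : MapsTo φ uDisk uDisk) (h0 : φ 0 = 0)
    (hr : r ∈ Ico (0 : ℝ) 1) (N : ℕ) :
    powMean 2 (fun z => powerSum c (φ z)) r
      ≤ ∑ k ∈ Finset.range N, ‖c k‖ ^ 2 + (r ^ 2) ^ N * (K * (1 - r)⁻¹) ^ 2 := by
  induction N generalizing c with
  | zero =>
    have hcont := ((differentiableOn_powerSum hK).comp hφ hmaps).continuousOn.mono
      (sphere_subset_uDisk hr.2)
    rw [Finset.sum_range_zero, pow_zero, zero_add, one_mul, ← Real.rpow_two]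
    refine powMean_le_rpow zero_le_two hr.1 hcont fun z hz => norm_powerSum_le hK ?_ hr.2
    exact (norm_le_norm_of_mapsTo_uDisk hφ hmaps h0 (sphere_subset_uDisk hr.2 hz)).trans_eq
      (mem_sphere_zero_iff_norm.1 hz)
  | succ N ih =>
    have hr2 : r ^ 2 ≤ 1 := pow_le_one₀ hr.1 hr.2.le
    calc powMean 2 (fun z => powerSum c (φ z)) r
        ≤ ‖c 0‖ ^ 2 + r ^ 2 * powMean 2 (fun z => powerSum (fun k => c (k + 1)) (φ z)) r :=
          powMean_two_powerSum_comp_le_add hK hφ hmaps h0 hr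
      _ ≤ ‖c 0‖ ^ 2 + r ^ 2 * (∑ k ∈ Finset.range N, ‖c (k + 1)‖ ^ 2
            + (r ^ 2) ^ N * (K * (1 - r)⁻¹) ^ 2) := by
          gcongr
          exact ih fun k => hK (k + 1)
      _ ≤ ‖c 0‖ ^ 2 + (1 * ∑ k ∈ Finset.range N, ‖c (k + 1)‖ ^ 2
            + r ^ 2 * ((r ^ 2) ^ N * (K * (1 - r)⁻¹) ^ 2)) := by
          rw [mul_add]
          gcongr
      _ = ∑ k ∈ Finset.range (N + 1), ‖c k‖ ^ 2
            + (r ^ 2) ^ (N + 1) * (K * (1 - r)⁻¹) ^ 2 := by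
          rw [Finset.sum_range_succ', pow_succ (r ^ 2)]
          ring

theorem powMean_two_powerSum_comp_le_tsum {r : ℝ} (hc : Summable fun k => ‖c k‖ ^ 2)
    (hφ : DifferentiableOn ℂ φ uDisk) (hmaps : MapsTo φ uDisk uDisk) (h0 : φ 0 = 0)
    (hr : r ∈ Ico (0 : ℝ) 1) :
    powMean 2 (fun z => powerSum c (φ z)) r ≤ ∑' k, ‖c k‖ ^ 2 := by
  obtain ⟨K, hK⟩ := exists_norm_le_of_summable_sq hc
  have hr2 : r ^ 2 < 1 := pow_lt_one₀ hr.1 hr.2 two_ne_zero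
  have hlim := hc.hasSum.tendsto_sum_nat.add
    ((tendsto_pow_atTop_nhds_zero_of_lt_one (sq_nonneg r) hr2).mul_const ((K * (1 - r)⁻¹) ^ 2))
  rw [zero_mul, add_zero] at hlim
  exact ge_of_tendsto' hlim (powMean_two_powerSum_comp_le_sum hK hφ hmaps h0 hr)

end Littlewood

/-! ### Polynomial approximation -/

section PolynomialApproximation

variable {c : ℕ → ℂ} {φ F : ℂ → ℂ} {M : ℝ}

lemma hasSum_coeff_mul_pow (P : ℂ[X]) (z : ℂ) :
    HasSum (fun k => P.coeff k * z ^ k) (P.eval z) := by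
  rw [Polynomial.eval_eq_sum]
  exact hasSum_sum_of_ne_finset_zero fun k hk => by
    rw [Polynomial.notMem_support_iff.1 hk, zero_mul]

lemma powerSum_sub_eval (P : ℂ[X]) {z : ℂ} (hz : Summable fun k => c k * z ^ k) :
    powerSum c z - P.eval z = powerSum (fun k => c k - P.coeff k) z := by
  rw [powerSum, powerSum, ← (hasSum_coeff_mul_pow P z).tsum_eq,
    ← hz.tsum_sub (hasSum_coeff_mul_pow P z).summable]
  simp only [sub_mul]

lemma hpNull_two_powerSum_comp_sub_eval {P : ℕ → ℂ[X]} (hc : Summable fun k => ‖c k‖ ^ 2)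
    (hle : ∀ m k, ‖c k - (P m).coeff k‖ ≤ ‖c k‖)
    (hlim : ∀ k, Tendsto (fun m => (P m).coeff k) atTop (𝓝 (c k)))
    (hφ : DifferentiableOn ℂ φ uDisk) (hmaps : MapsTo φ uDisk uDisk) (h0 : φ 0 = 0) :
    HpNull 2 fun m z => powerSum c (φ z) - (P m).eval (φ z) := by
  have hsq : ∀ m k, ‖c k - (P m).coeff k‖ ^ 2 ≤ ‖c k‖ ^ 2 := fun m k => by
    gcongr
    exact hle m k
  have hlim0 : Tendsto (fun m => ∑' k, ‖c k - (P m).coeff k‖ ^ 2) atTop (𝓝 0) := by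
    have hterm : ∀ k, Tendsto (fun m => ‖c k - (P m).coeff k‖ ^ 2) atTop (𝓝 0) := fun k => by
      simpa using (((hlim k).const_sub (c k)).norm.pow 2)
    simpa using tendsto_tsum_of_dominated_convergence hc hterm
      (.of_forall fun m k => by rw [Real.norm_of_nonneg (by positivity)]; exact hsq m k)
  obtain ⟨K, hK⟩ := exists_norm_le_of_summable_sq hc
  refine .of_tendsto hlim0 fun m r hr => ?_
  have hdiff : EqOn (fun z => powerSum c (φ z) - (P m).eval (φ z))
      (fun z => powerSum (fun k => c k - (P m).coeff k) (φ z)) (sphere 0 r) := fun z hz =>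
    powerSum_sub_eval (P m) (summable_mul_pow (summable_mul_pow_of_bounded hK (norm_nonneg (φ z))
      (mem_ball_zero_iff.1 (hmaps (sphere_subset_uDisk hr.2 hz)))) le_rfl)
  rw [powMean_congr hr.1 hdiff]
  exact powMean_two_powerSum_comp_le_tsum (.of_nonneg_of_le (fun _ => by positivity) (hsq m) hc)
    hφ hmaps h0 hr

/-- The `N`-th partial sum of the dilated series `∑ c_k ρ^k z^k`. -/
def dilatedTrunc (c : ℕ → ℂ) (ρ : ℝ) (N : ℕ) : ℂ[X] :=
  ∑ k ∈ Finset.range N, Polynomial.monomial k (c k * (ρ : ℂ) ^ k)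

lemma coeff_dilatedTrunc (c : ℕ → ℂ) (ρ : ℝ) (N k : ℕ) :
    (dilatedTrunc c ρ N).coeff k = if k < N then c k * (ρ : ℂ) ^ k else 0 := by
  simp [dilatedTrunc, Polynomial.finsetSum_coeff, Polynomial.coeff_monomial]

lemma hpNull_two_powerSum_comp_sub_dilatedTrunc {ρ : ℕ → ℝ} {N : ℕ → ℕ}
    (hc : Summable fun k => ‖c k‖ ^ 2) (hρ : ∀ m, ρ m ∈ Icc (0 : ℝ) 1)
    (hρ1 : Tendsto ρ atTop (𝓝 1)) (hN : Tendsto N atTop atTop)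
    (hφ : DifferentiableOn ℂ φ uDisk) (hmaps : MapsTo φ uDisk uDisk) (h0 : φ 0 = 0) :
    HpNull 2 fun m z => powerSum c (φ z) - (dilatedTrunc c (ρ m) (N m)).eval (φ z) := by
  refine hpNull_two_powerSum_comp_sub_eval hc (fun m k => ?_) (fun k => ?_) hφ hmaps h0
  · rw [coeff_dilatedTrunc]
    split_ifs
    · have hpow : ‖(1 : ℂ) - (ρ m : ℂ) ^ k‖ ≤ 1 := by
        rw [← ofReal_pow, ← ofReal_one, ← ofReal_sub, Complex.norm_real, Real.norm_of_nonneg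
          (sub_nonneg.2 (pow_le_one₀ (hρ m).1 (hρ m).2))]
        exact sub_le_self _ (pow_nonneg (hρ m).1 k)
      rw [← mul_one_sub, norm_mul]
      exact mul_le_of_le_one_right (norm_nonneg _) hpow
    · rw [sub_zero]
  · have hpow : Tendsto (fun m => c k * (ρ m : ℂ) ^ k) atTop (𝓝 (c k)) := by
      simpa using (((Complex.continuous_ofReal.tendsto 1).comp hρ1).pow k).const_mul (c k)
    refine hpow.congr' ?_
    filter_upwards [hN.eventually_gt_atTop k] with m hm
    rw [coeff_dilatedTrunc, if_pos hm]

lemma exists_hasSum_pow_of_differentiableOn (hF : DifferentiableOn ℂ F uDisk) :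
    ∃ c : ℕ → ℂ, ∀ z ∈ uDisk, HasSum (fun k => c k * z ^ k) (F z) := by
  refine ⟨fun k => ((k.factorial : ℂ))⁻¹ * iteratedDeriv k F 0, fun z hz => ?_⟩
  refine (Complex.hasSum_taylorSeries_on_ball hF hz).congr_fun fun k => ?_
  simp only [smul_eq_mul, sub_zero]
  ring

lemma sum_sq_le_of_hasSum_of_bounded (hc : ∀ z ∈ uDisk, HasSum (fun k => c k * z ^ k) (F z))
    (hM : ∀ z ∈ uDisk, ‖F z‖ ≤ M) (N : ℕ) : ∑ k ∈ Finset.range N, ‖c k‖ ^ 2 ≤ M ^ 2 := by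
  have hρ : ∀ ρ ∈ Ioo (0 : ℝ) 1,
      ∑ k ∈ Finset.range N, ‖c k‖ ^ 2 * (ρ ^ 2) ^ k ≤ M ^ 2 := fun ρ hρ => by
    have hρmem : (ρ : ℂ) ∈ uDisk := by simpa [uDisk, abs_of_pos hρ.1] using hρ.2
    have hsum : Summable fun k => ‖c k‖ * ρ ^ k := by
      simpa [abs_of_pos hρ.1] using (hc ρ hρmem).summable.norm
    refine (sum_sq_le_powMean_powerSum hρ.1 hsum N).trans ?_
    rw [← Real.rpow_two M]
    refine powMean_le_rpow zero_le_two hρ.1.le ((diffContOnCl_powerSum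
      hsum).continuousOn_ball.mono sphere_subset_closedBall) fun z hz => ?_
    rw [powerSum, (hc z (sphere_subset_uDisk hρ.2 hz)).tsum_eq]
    exact hM z (sphere_subset_uDisk hρ.2 hz)
  have hlim : Tendsto (fun ρ : ℝ => ∑ k ∈ Finset.range N, ‖c k‖ ^ 2 * (ρ ^ 2) ^ k) (𝓝[<] 1)
      (𝓝 (∑ k ∈ Finset.range N, ‖c k‖ ^ 2)) := by
    have hcont : Continuous fun ρ : ℝ => ∑ k ∈ Finset.range N, ‖c k‖ ^ 2 * (ρ ^ 2) ^ k := by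
      fun_prop
    simpa using (hcont.tendsto 1).mono_left nhdsWithin_le_nhds
  refine le_of_tendsto hlim ?_
  filter_upwards [Ioo_mem_nhdsLT one_pos] with ρ h using hρ ρ h

lemma norm_eval_dilatedTrunc_le {ρ : ℝ} {N : ℕ}
    (hc : ∀ z ∈ uDisk, HasSum (fun k => c k * z ^ k) (F z)) (hM : ∀ z ∈ uDisk, ‖F z‖ ≤ M)
    (hρ : ρ ∈ Ico (0 : ℝ) 1) (hs : Summable fun k => ‖c k‖ * ρ ^ k) {z : ℂ} (hz : z ∈ uDisk) :
    ‖(dilatedTrunc c ρ N).eval z‖ ≤ M + ∑' k, ‖c (k + N)‖ * ρ ^ (k + N) := by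
  have hnorm : ‖(ρ : ℂ) * z‖ ≤ ρ := by
    rw [norm_mul, Complex.norm_real, Real.norm_of_nonneg hρ.1]
    exact mul_le_of_le_one_right hρ.1 (mem_ball_zero_iff.1 hz).le
  have hmem : (ρ : ℂ) * z ∈ uDisk := mem_ball_zero_iff.2 (hnorm.trans_lt hρ.2)
  have heval : (dilatedTrunc c ρ N).eval z = ∑ k ∈ Finset.range N, c k * ((ρ : ℂ) * z) ^ k := by
    simp [dilatedTrunc, Polynomial.eval_finsetSum, mul_pow, mul_assoc]
  have hsplit := (hc _ hmem).summable.sum_add_tsum_nat_add N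
  rw [(hc _ hmem).tsum_eq] at hsplit
  rw [heval, eq_sub_of_add_eq hsplit]
  refine (norm_sub_le _ _).trans (add_le_add (hM _ hmem) ?_)
  exact tsum_of_norm_bounded ((summable_nat_add_iff N).2 hs).hasSum
    fun k => norm_mul_pow_le hnorm _ _

theorem exists_bounded_polynomial_approx (hF : DifferentiableOn ℂ F uDisk)
    (hM : ∀ z ∈ uDisk, ‖F z‖ ≤ M) :
    ∃ P : ℕ → ℂ[X], (∀ m, ∀ z ∈ uDisk, ‖(P m).eval z‖ ≤ M + 1) ∧
      ∀ φ : ℂ → ℂ, DifferentiableOn ℂ φ uDisk → MapsTo φ uDisk uDisk → φ 0 = 0 →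
        HpNull 2 fun m z => F (φ z) - (P m).eval (φ z) := by
  obtain ⟨c, hc⟩ := exists_hasSum_pow_of_differentiableOn hF
  have hsq : Summable fun k => ‖c k‖ ^ 2 :=
    summable_of_sum_range_le (fun _ => by positivity) (sum_sq_le_of_hasSum_of_bounded hc hM)
  obtain ⟨K, hK⟩ := exists_norm_le_of_summable_sq hsq
  obtain ⟨ρ, -, hρ, hρ1⟩ := exists_seq_strictMono_tendsto' (zero_lt_one' ℝ)
  have hs : ∀ m, Summable fun k => ‖c k‖ * ρ m ^ k := fun m =>
    summable_mul_pow_of_bounded hK (hρ m).1.le (hρ m).2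
  have htail : ∀ m, ∃ N ≥ m, ∑' k, ‖c (k + N)‖ * ρ m ^ (k + N) ≤ 1 := fun m =>
    ((eventually_ge_atTop m).and ((tendsto_sum_nat_add fun k => ‖c k‖ * ρ m ^ k).eventually
      (ge_mem_nhds one_pos))).exists
  choose N hNm hN using htail
  refine ⟨fun m => dilatedTrunc c (ρ m) (N m), fun m z hz => ?_, fun φ hφ hmaps h0 => ?_⟩
  · exact (norm_eval_dilatedTrunc_le hc hM (Ioo_subset_Ico_self (hρ m)) (hs m) hz).trans
      (add_le_add le_rfl (hN m))
  · refine (hpNull_two_powerSum_comp_sub_dilatedTrunc hsq (fun m => Ioo_subset_Icc_self (hρ m)) hρ1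
      (tendsto_atTop_mono hNm tendsto_id) hφ hmaps h0).congr fun m z hz => ?_
    simp only [powerSum, (hc _ (hmaps hz)).tsum_eq]

end PolynomialApproximation

/-! ### The maximum principle for `|f|^q - Re Q` -/

section MaximumPrinciple

variable {f Q : ℂ → ℂ} {q : ℝ} {z₀ : ℂ} {U : Set ℂ}

lemma exists_branch_rpow (q : ℝ) (hf : ∀ᶠ z in 𝓝 z₀, DifferentiableAt ℂ f z) (hf0 : f z₀ ≠ 0) :
    ∃ F : ℂ → ℂ, (∀ᶠ z in 𝓝 z₀, DifferentiableAt ℂ F z ∧ ‖F z‖ = ‖f z‖ ^ q) ∧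
      F z₀ = (‖f z₀‖ ^ q : ℝ) := by
  refine ⟨fun z => exp (q * Complex.log (f z / f z₀)) * (‖f z₀‖ ^ q : ℝ), ?_, by
    simp [div_self hf0]⟩
  have hslit : ∀ᶠ z in 𝓝 z₀, f z / f z₀ ∈ slitPlane :=
    (hf.self_of_nhds.continuousAt.div_const _).eventually_mem
      (isOpen_slitPlane.mem_nhds (by simp [div_self hf0]))
  filter_upwards [hf, hslit] with z hfz hz
  have hlog : DifferentiableAt ℂ (fun z => Complex.log (f z / f z₀)) z := (hfz.div_const _).clog hz
  refine ⟨(hlog.const_mul _).cexp.mul_const _, ?_⟩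
  have hz₀pos : 0 < ‖f z₀‖ := norm_pos_iff.2 hf0
  have hzpos : 0 < ‖f z‖ := norm_pos_iff.2 fun h => slitPlane_ne_zero hz (by simp [h])
  rw [norm_mul, Complex.norm_exp, Complex.re_ofReal_mul, Complex.log_re, norm_div,
    Complex.norm_real, Real.norm_of_nonneg (by positivity), mul_comm q,
    ← Real.rpow_def_of_pos (by positivity), Real.div_rpow hzpos.le hz₀pos.le,
    div_mul_cancel₀ _ (by positivity)]

/-- With the branch `F` of `f^q` normalised to be positive at `z₀`, `Re (F - Q)` touches
`‖f‖^q - Re Q` from below there, so `|exp (F - Q)|` has a local maximum. -/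
lemma eventually_eq_of_isLocalMax_rpow_norm_sub_re (hf : ∀ᶠ z in 𝓝 z₀, DifferentiableAt ℂ f z)
    (hQ : ∀ᶠ z in 𝓝 z₀, DifferentiableAt ℂ Q z) (hf0 : f z₀ ≠ 0)
    (hmax : IsLocalMax (fun z => ‖f z‖ ^ q - (Q z).re) z₀) :
    ∀ᶠ z in 𝓝 z₀, ‖f z‖ ^ q - (Q z).re = ‖f z₀‖ ^ q - (Q z₀).re := by
  obtain ⟨F, hF, hF0⟩ := exists_branch_rpow q hf hf0
  have hre : ∀ᶠ z in 𝓝 z₀, (F z - Q z).re ≤ ‖f z‖ ^ q - (Q z).re := by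
    filter_upwards [hF] with z hz
    rw [sub_re, ← hz.2]
    exact sub_le_sub_right (Complex.re_le_norm _) _
  have hre0 : (F z₀ - Q z₀).re = ‖f z₀‖ ^ q - (Q z₀).re := by rw [sub_re, hF0, ofReal_re]
  have hexp := Complex.eventually_eq_of_isLocalMax_norm (f := fun z => exp (F z - Q z)) (c := z₀)
    (by filter_upwards [hF, hQ] with z hFz hQz using (hFz.1.sub hQz).cexp)
    (by
      filter_upwards [hre, hmax] with z hz hzmax
      simp only [Function.comp, Complex.norm_exp, hre0]
      exact Real.exp_le_exp.2 (hz.trans hzmax))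
  filter_upwards [hexp, hre, hmax] with z hz hle hzmax
  have hreal := congrArg norm hz
  rw [Complex.norm_exp, Complex.norm_exp, Real.exp_eq_exp, hre0] at hreal
  exact le_antisymm hzmax (hreal.ge.trans hle)

lemma re_nonneg_of_forall_mem_frontier (hU : Bornology.IsBounded U) (hQ : DiffContOnCl ℂ Q U)
    (hb : ∀ z ∈ frontier U, 0 ≤ (Q z).re) {z : ℂ} (hz : z ∈ closure U) : 0 ≤ (Q z).re := by
  have hnorm : ∀ w, ‖exp (-(Q w))‖ ≤ 1 ↔ 0 ≤ (Q w).re := fun w => by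
    rw [Complex.norm_exp, Real.exp_le_one_iff, neg_re, neg_nonpos]
  have hexp : DiffContOnCl ℂ (fun z => exp (-(Q z))) U :=
    (Complex.differentiable_exp.diffContOnCl (s := univ)).comp hQ.neg fun _ _ => mem_univ _
  exact (hnorm z).1 (norm_le_of_forall_mem_frontier_norm_le hU hexp
    (fun w hw => (hnorm w).2 (hb w hw)) hz)

theorem rpow_norm_le_re_of_forall_mem_frontier (hU : Bornology.IsBounded U) (hUo : IsOpen U)
    (hq : 0 < q) (hf : DiffContOnCl ℂ f U) (hQ : DiffContOnCl ℂ Q U)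
    (hb : ∀ z ∈ frontier U, ‖f z‖ ^ q ≤ (Q z).re) {z : ℂ} (hz : z ∈ closure U) :
    ‖f z‖ ^ q ≤ (Q z).re := by
  set v : ℂ → ℝ := fun z => ‖f z‖ ^ q - (Q z).re
  have hvc : ContinuousOn v (closure U) :=
    (hf.continuousOn.norm.rpow_const fun _ _ => Or.inr hq.le).sub
      (Complex.continuous_re.comp_continuousOn hQ.continuousOn)
  obtain ⟨z₁, hz₁, hmax⟩ := hU.isCompact_closure.exists_isMaxOn ⟨z, hz⟩ hvc
  by_contra! hcon
  have hpos : 0 < v z₁ := (sub_pos.2 hcon).trans_le (hmax hz)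
  set S : Set ℂ := closure U ∩ v ⁻¹' {v z₁}
  have hScompact : IsCompact S := hU.isCompact_closure.of_isClosed_subset
    (hvc.preimage_isClosed_of_isClosed isClosed_closure isClosed_singleton) inter_subset_left
  have hSU : S ⊆ U := fun w hw => by
    by_contra hwU
    have hfront := hb w (by rw [hUo.frontier_eq]; exact ⟨hw.1, hwU⟩)
    have hval : ‖f w‖ ^ q - (Q w).re = v z₁ := hw.2
    linarith
  have hSopen : IsOpen S := isOpen_iff_mem_nhds.2 fun w hw => by
    have hval : ‖f w‖ ^ q - (Q w).re = v z₁ := hw.2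
    have hnhds : U ∈ 𝓝 w := hUo.mem_nhds (hSU hw)
    have hfw : f w ≠ 0 := fun h => by
      rw [h, norm_zero, Real.zero_rpow hq.ne'] at hval
      linarith [re_nonneg_of_forall_mem_frontier hU hQ
        (fun w hw => (by positivity : 0 ≤ ‖f w‖ ^ q).trans (hb w hw)) hw.1]
    have hlocmax : IsLocalMax v w := by
      filter_upwards [hnhds] with y hy using (hmax (subset_closure hy)).trans hval.ge
    filter_upwards [hnhds, eventually_eq_of_isLocalMax_rpow_norm_sub_re
      (hf.differentiableOn.eventually_differentiableAt hnhds)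
      (hQ.differentiableOn.eventually_differentiableAt hnhds) hfw hlocmax] with y hyU hy
      using ⟨subset_closure hyU, hy.trans hval⟩
  have hSuniv : S = univ := IsClopen.eq_univ ⟨hScompact.isClosed, hSopen⟩ ⟨z₁, hz₁, rfl⟩
  exact noncompact_univ ℂ (hSuniv ▸ hScompact)

end MaximumPrinciple

/-! ### Harmonic majorants -/

lemma exists_eval_add_conj_eval_of_mem_span_fourier {t : C(UnitAddCircle, ℂ)}
    (ht : t ∈ Submodule.span ℂ (range (@fourier 1))) :
    ∃ P Q : ℂ[X], ∀ x : UnitAddCircle,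
      t x = P.eval (x.toCircle : ℂ) + starRingEnd ℂ (Q.eval (x.toCircle : ℂ)) := by
  induction ht using Submodule.span_induction with
  | mem t ht =>
    obtain ⟨k, rfl⟩ := ht
    rcases Int.eq_nat_or_neg k with ⟨m, rfl | rfl⟩
    · exact ⟨X ^ m, 0, fun x => by simp [fourier_apply, AddCircle.toCircle_nsmul]⟩
    · exact ⟨0, X ^ m, fun x => by
        rw [fourier_neg]
        simp [fourier_apply, AddCircle.toCircle_nsmul]⟩
  | zero => exact ⟨0, 0, fun x => by simp⟩
  | add t u _ _ ht hu =>
    obtain ⟨P, Q, hPQ⟩ := ht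
    obtain ⟨P', Q', hPQ'⟩ := hu
    refine ⟨P + P', Q + Q', fun x => ?_⟩
    simp only [ContinuousMap.add_apply, hPQ, hPQ', Polynomial.eval_add, map_add]
    ring
  | smul a t _ ht =>
    obtain ⟨P, Q, hPQ⟩ := ht
    refine ⟨C a * P, C (starRingEnd ℂ a) * Q, fun x => ?_⟩
    simp only [ContinuousMap.smul_apply, hPQ, Polynomial.eval_mul, Polynomial.eval_C, map_mul,
      smul_eq_mul, Complex.conj_conj]
    ring

lemma exists_polynomial_abs_sub_re_lt {s : ℂ → ℝ} (hs : ContinuousOn s (sphere 0 1)) {ε : ℝ}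
    (hε : 0 < ε) : ∃ Q : ℂ[X], ∀ w ∈ sphere (0 : ℂ) 1, |s w - (Q.eval w).re| < ε := by
  let S : C(UnitAddCircle, ℂ) := ⟨fun x => (s x.toCircle : ℂ), Complex.continuous_ofReal.comp
    (hs.comp_continuous (continuous_subtype_val.comp AddCircle.continuous_toCircle) fun x =>
      mem_sphere_zero_iff_norm.2 (Circle.norm_coe _))⟩
  have hS : S ∈ (Submodule.span ℂ (range (@fourier 1))).topologicalClosure := by
    rw [span_fourier_closure_eq_top]
    trivial
  obtain ⟨t, ht, hSt⟩ := Metric.mem_closure_iff.1 hS ε hε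
  obtain ⟨P, Q, hPQ⟩ := exists_eval_add_conj_eval_of_mem_span_fourier ht
  refine ⟨P + Q, fun w hw => ?_⟩
  obtain ⟨x, hx⟩ := (AddCircle.homeomorphCircle one_ne_zero).surjective
    ⟨w, mem_sphere_zero_iff_norm.2 (mem_sphere_zero_iff_norm.1 hw)⟩
  obtain rfl : (x.toCircle : ℂ) = w := by rw [← AddCircle.homeomorphCircle_apply one_ne_zero, hx]
  calc |s x.toCircle - ((P + Q).eval (x.toCircle : ℂ)).re| = |(S x - t x).re| := by
        simp only [S, hPQ, ContinuousMap.coe_mk, Polynomial.eval_add, sub_re, add_re, conj_re,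
          ofReal_re]
    _ ≤ ‖S x - t x‖ := Complex.abs_re_le_norm _
    _ = dist (S x) (t x) := (dist_eq_norm _ _).symm
    _ < ε := (ContinuousMap.dist_apply_le_dist x).trans_lt hSt

lemma powMean_two_le_two_mul_re {h : ℂ → ℂ} {r : ℝ} (hr : 0 ≤ r)
    (hh : DiffContOnCl ℂ h (ball 0 r)) (h0 : (h 0).im = 0) :
    powMean 2 h r ≤ 2 * powMean 2 (fun z => ((h z).re : ℂ)) r := by
  have hcont : ContinuousOn h (sphere 0 r) := hh.continuousOn_ball.mono sphere_subset_closedBall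
  have hsq : DiffContOnCl ℂ (fun z => h z ^ 2) (ball 0 r) := by
    simpa only [sq, smul_eq_mul] using hh.smul hh
  have hexpand : (fun z => ‖h z‖ ^ (2 : ℝ)) + (fun z => (h z ^ 2).re)
      = (2 : ℝ) • fun z => ‖((h z).re : ℂ)‖ ^ (2 : ℝ) := by
    funext z
    simp only [Pi.add_apply, Pi.smul_apply, smul_eq_mul, Real.rpow_two, Complex.norm_real,
      Real.norm_eq_abs, sq_abs, ← Complex.normSq_eq_norm_sq, Complex.normSq_apply, sq (h z), mul_re]
    ring
  have hint : CircleIntegrable (fun z => (h z ^ 2).re) 0 r :=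
    (Complex.continuous_re.comp_continuousOn (hcont.pow 2)).circleIntegrable hr
  have hmean := congrArg (Real.circleAverage · 0 r) hexpand
  simp only [Real.circleAverage_smul] at hmean
  rw [Real.circleAverage_add (circleIntegrable_norm_rpow zero_le_two hr hcont) hint,
    circleAverage_re_eq hr hsq] at hmean
  have hsq0 : 0 ≤ (h 0 ^ 2).re := by
    rw [sq, mul_re, h0, mul_zero, sub_zero]
    exact mul_self_nonneg _
  rw [powMean, powMean, ← smul_eq_mul, ← hmean]
  exact le_add_of_nonneg_right hsq0

lemma exists_polynomial_re_majorant {p : ℝ} (hp : 0 < p) {f : ℂ → ℂ}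
    (hf : DiffContOnCl ℂ f (ball 0 1)) :
    ∃ Q : ℂ[X], (∀ z ∈ closedBall (0 : ℂ) 1, ‖f z‖ ^ (p / 2) ≤ (Q.eval z).re) ∧
      powMean 2 (fun z => Q.eval z) 1 ≤ 4 * powMean p f 1 + 4 := by
  have hfc : ContinuousOn f (sphere 0 1) := hf.continuousOn_ball.mono sphere_subset_closedBall
  obtain ⟨Q₀, hQ₀⟩ := exists_polynomial_abs_sub_re_lt (s := fun z => ‖f z‖ ^ (p / 2) + 1 / 2)
    ((hfc.norm.rpow_const fun _ _ => Or.inr (by positivity)).add continuousOn_const) one_half_pos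
  set Q : ℂ[X] := Q₀ - C ((Q₀.eval 0).im * I : ℂ) with hQ
  have hbound : ∀ z ∈ sphere (0 : ℂ) 1,
      ‖f z‖ ^ (p / 2) ≤ (Q.eval z).re ∧ (Q.eval z).re ≤ ‖f z‖ ^ (p / 2) + 1 := fun z hz => by
    have hre : (Q.eval z).re = (Q₀.eval z).re := by simp [hQ]
    have habs := abs_lt.1 (hQ₀ z hz)
    constructor <;> linarith [habs.1, habs.2]
  refine ⟨Q, fun z hz => ?_, ?_⟩
  · refine rpow_norm_le_re_of_forall_mem_frontier (Q := fun z => Q.eval z) isBounded_ball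
      isOpen_ball (by positivity) hf Q.differentiable.diffContOnCl (fun z hz => ?_)
      (by rwa [closure_ball _ one_ne_zero])
    rw [frontier_ball _ one_ne_zero] at hz
    exact (hbound z hz).1
  · have hrecont : ContinuousOn (fun z => ((Q.eval z).re : ℂ)) (sphere 0 1) := by fun_prop
    have hle : powMean 2 (fun z => ((Q.eval z).re : ℂ)) 1
        ≤ 2 * powMean p f 1 + 2 * powMean 1 (fun _ => 1) 1 := by
      refine powMean_le_add zero_le_two hp.le zero_le_one zero_le_one hrecont hfc
        continuousOn_const fun z hz => ?_
      rw [Complex.norm_real, Real.rpow_two, Real.norm_eq_abs, sq_abs,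
        rpow_eq_sq_rpow_half (norm_nonneg _), norm_one, Real.one_rpow]
      nlinarith [hbound z hz, Real.rpow_nonneg (norm_nonneg (f z)) (p / 2),
        sq_nonneg (‖f z‖ ^ (p / 2) - 1)]
    rw [powMean_const, norm_one, Real.one_rpow] at hle
    linarith [powMean_two_le_two_mul_re (h := fun z => Q.eval z) zero_le_one
      Q.differentiable.diffContOnCl (by simp [hQ])]

lemma exists_subseq_tendsto_powerSum {c : ℕ → ℕ → ℂ} {K : ℝ}
    (hK : ∀ j N, ∑ k ∈ Finset.range N, ‖c j k‖ ^ 2 ≤ K) :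
    ∃ (d : ℕ → ℂ) (ψ : ℕ → ℕ), StrictMono ψ ∧ (Summable fun k => ‖d k‖ ^ 2) ∧
      ∀ z ∈ uDisk, Tendsto (fun j => powerSum (c (ψ j)) z) atTop (𝓝 (powerSum d z)) := by
  have hbound : ∀ j k, ‖c j k‖ ≤ √K := fun j k => Real.le_sqrt_of_sq_le <|
    (Finset.single_le_sum (f := fun k => ‖c j k‖ ^ 2) (fun _ _ => by positivity)
      (Finset.self_mem_range_succ k)).trans (hK j (k + 1))
  obtain ⟨d, -, ψ, hψ, hlim⟩ :=
    (isCompact_univ_pi fun _ : ℕ => isCompact_closedBall (0 : ℂ) √K).tendsto_subseq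
      (x := c) fun j => mem_univ_pi.2 fun k => mem_closedBall_zero_iff.2 (hbound j k)
  have hcoeff : ∀ k, Tendsto (fun j => c (ψ j) k) atTop (𝓝 (d k)) := tendsto_pi_nhds.1 hlim
  refine ⟨d, ψ, hψ, summable_of_sum_range_le (c := K) (fun _ => by positivity) fun N =>
    le_of_tendsto' (tendsto_finsetSum _ fun k _ => (hcoeff k).norm.pow 2) fun j => hK (ψ j) N,
    fun z hz => ?_⟩
  refine tendsto_tsum_of_dominated_convergence (bound := fun k => √K * ‖z‖ ^ k)
    ((summable_geometric_of_lt_one (norm_nonneg _) (mem_ball_zero_iff.1 hz)).mul_left _)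
    (fun k => (hcoeff k).mul_const _) (.of_forall fun j k => ?_)
  rw [norm_mul, norm_pow]
  gcongr
  exact hbound (ψ j) k

lemma powMean_comp_mul (p R : ℝ) (f : ℂ → ℂ) :
    powMean p (fun z => f (R * z)) 1 = powMean p f R := by
  simp only [powMean, Real.circleAverage_def, circleMap_zero, ofReal_one, one_mul]

theorem exists_re_powerSum_majorant {p C : ℝ} (hp : 0 < p) {f : ℂ → ℂ}
    (hf : DifferentiableOn ℂ f uDisk) (hC : ∀ r ∈ Ico (0 : ℝ) 1, powMean p f r ≤ C) :
    ∃ c : ℕ → ℂ, (Summable fun k => ‖c k‖ ^ 2) ∧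
      ∀ z ∈ uDisk, ‖f z‖ ^ (p / 2) ≤ (powerSum c z).re := by
  obtain ⟨R, -, hR, hR1⟩ := exists_seq_strictMono_tendsto' (zero_lt_one' ℝ)
  have hdilate : ∀ j, DiffContOnCl ℂ (fun z => f (R j * z)) (ball 0 1) := fun j => by
    have hmaps : MapsTo (fun z : ℂ => (R j : ℂ) * z) (closedBall 0 1) uDisk := fun z hz => by
      rw [uDisk, mem_ball_zero_iff, norm_mul, Complex.norm_real, Real.norm_of_nonneg (hR j).1.le]
      exact (mul_le_of_le_one_right (hR j).1.le (mem_closedBall_zero_iff.1 hz)).trans_lt (hR j).2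
    refine ⟨hf.comp (by fun_prop) (hmaps.mono_left ball_subset_closedBall), ?_⟩
    rw [closure_ball _ one_ne_zero]
    exact hf.continuousOn.comp (by fun_prop) hmaps
  choose Q hQmaj hQmean using fun j => exists_polynomial_re_majorant hp (hdilate j)
  have heval : ∀ j, powerSum (Q j).coeff = fun z => (Q j).eval z := fun j =>
    funext fun z => (hasSum_coeff_mul_pow (Q j) z).tsum_eq
  have hcoeff : ∀ j N, ∑ k ∈ Finset.range N, ‖(Q j).coeff k‖ ^ 2 ≤ 4 * C + 4 := fun j N => by
    have hbessel := sum_sq_le_powMean_powerSum one_pos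
      (by simpa using (hasSum_coeff_mul_pow (Q j) 1).summable.norm) N
    have hmean := hQmean j
    rw [powMean_comp_mul] at hmean
    simp only [heval, one_pow, mul_one] at hbessel
    linarith [hC (R j) (Ioo_subset_Ico_self (hR j))]
  obtain ⟨c, ψ, hψ, hsq, hlim⟩ := exists_subseq_tendsto_powerSum hcoeff
  refine ⟨c, hsq, fun z hz => ?_⟩
  have hdil : Tendsto (fun j => f (R (ψ j) * z)) atTop (𝓝 (f z)) := by
    have hRz : Tendsto (fun j => (R (ψ j) : ℂ) * z) atTop (𝓝 z) := by
      simpa using ((Complex.continuous_ofReal.tendsto 1).comp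
        (hR1.comp hψ.tendsto_atTop)).mul_const z
    exact (hf.continuousOn.continuousAt (isOpen_ball.mem_nhds hz)).tendsto.comp hRz
  refine le_of_tendsto_of_tendsto' (hdil.norm.rpow_const (Or.inr (by positivity)))
    ((Complex.continuous_re.tendsto _).comp (hlim z hz)) fun j => ?_
  simp only [Function.comp, heval]
  exact hQmaj (ψ j) z (ball_subset_closedBall hz)

/-! ### Density of `H^∞` in `H^p` -/

lemma norm_one_sub_pow_le {x : ℂ} (hx : ‖x‖ ≤ 1) (N : ℕ) : ‖1 - x ^ N‖ ≤ N * ‖1 - x‖ := by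
  have hsum : ‖∑ i ∈ Finset.range N, x ^ i‖ ≤ N := by
    calc ‖∑ i ∈ Finset.range N, x ^ i‖ ≤ ∑ _i ∈ Finset.range N, (1 : ℝ) :=
          norm_sum_le_of_le _ fun i _ =>
            (norm_pow x i).trans_le (pow_le_one₀ (norm_nonneg _) hx)
      _ = N := by simp
  rw [← mul_neg_geom_sum x N, norm_mul, mul_comm]
  gcongr

/-- For large `t` a factor close to `1`, which for `Re w ≥ 0` has modulus at most `1`. Its `N`-th
power is `O(|w|⁻ᴺ)` for fixed `t`, so it turns a function dominated by `|w|ᴺ` into a bounded one. -/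
def damping (t : ℝ) (w : ℂ) : ℂ := t / (t + w)

section Damping

variable {t : ℝ} {w : ℂ}

lemma add_re_le_norm_add (t : ℝ) (w : ℂ) : t + w.re ≤ ‖(t : ℂ) + w‖ := by
  simpa using Complex.re_le_norm ((t : ℂ) + w)

lemma norm_ofReal_add_pos (ht : 0 < t) (hw : 0 ≤ w.re) : 0 < ‖(t : ℂ) + w‖ :=
  (add_pos_of_pos_of_nonneg ht hw).trans_le (add_re_le_norm_add t w)

lemma norm_damping (ht : 0 ≤ t) (w : ℂ) : ‖damping t w‖ = t / ‖(t : ℂ) + w‖ := by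
  rw [damping, norm_div, Complex.norm_real, Real.norm_of_nonneg ht]

lemma norm_damping_le_one (ht : 0 < t) (hw : 0 ≤ w.re) : ‖damping t w‖ ≤ 1 := by
  rw [norm_damping ht.le, div_le_one (norm_ofReal_add_pos ht hw)]
  exact (le_add_of_nonneg_right hw).trans (add_re_le_norm_add t w)

lemma norm_one_sub_damping_pow_le_two (ht : 0 < t) (hw : 0 ≤ w.re) (N : ℕ) :
    ‖1 - damping t w ^ N‖ ≤ 2 := by
  refine (norm_sub_le _ _).trans ?_
  rw [norm_one, norm_pow]
  linarith [pow_le_one₀ (norm_nonneg _) (norm_damping_le_one ht hw) (n := N)]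

lemma norm_one_sub_damping_pow_le (ht : 0 < t) (hw : 0 ≤ w.re) (N : ℕ) :
    ‖1 - damping t w ^ N‖ ≤ N / t * ‖w‖ := by
  have hpos := norm_ofReal_add_pos ht hw
  have hsub : 1 - damping t w = w / (t + w) := by
    rw [damping, one_sub_div (norm_pos_iff.1 hpos), add_sub_cancel_left]
  calc ‖1 - damping t w ^ N‖ ≤ N * ‖1 - damping t w‖ :=
        norm_one_sub_pow_le (norm_damping_le_one ht hw) N
    _ = N * (‖w‖ / ‖(t : ℂ) + w‖) := by rw [hsub, norm_div]
    _ ≤ N * (‖w‖ / t) := by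
        gcongr
        exact (le_add_of_nonneg_right hw).trans (add_re_le_norm_add t w)
    _ = N / t * ‖w‖ := by ring

lemma norm_mul_damping_pow_le {p : ℝ} {N : ℕ} {y : ℂ} (hp : 0 < p) (hN : 2 / p ≤ N) (ht : 1 ≤ t)
    (hy : ‖y‖ ^ (p / 2) ≤ w.re) : ‖y * damping t w ^ N‖ ≤ t ^ N := by
  have ht0 : 0 < t := one_pos.trans_le ht
  have hw : 0 ≤ w.re := (Real.rpow_nonneg (norm_nonneg _) _).trans hy
  have hadd := add_re_le_norm_add t w
  have hnorm : ‖y‖ ≤ ‖(t : ℂ) + w‖ ^ N := by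
    calc ‖y‖ = (‖y‖ ^ (p / 2)) ^ (2 / p) := by
          rw [← Real.rpow_mul (norm_nonneg _), div_mul_div_cancel₀ two_ne_zero, div_self hp.ne',
            Real.rpow_one]
      _ ≤ ‖(t : ℂ) + w‖ ^ (2 / p) := by
          refine Real.rpow_le_rpow (by positivity) ?_ (by positivity)
          linarith
      _ ≤ ‖(t : ℂ) + w‖ ^ (N : ℝ) := Real.rpow_le_rpow_of_exponent_le (by linarith) hN
      _ = ‖(t : ℂ) + w‖ ^ N := Real.rpow_natCast _ _
  rw [norm_mul, norm_pow, norm_damping ht0.le, div_pow, ← mul_div_assoc,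
    div_le_iff₀ (pow_pos (norm_ofReal_add_pos ht0 hw) N), mul_comm]
  gcongr

lemma differentiableOn_damping_comp {W : ℂ → ℂ} (ht : 0 < t) (hW : DifferentiableOn ℂ W uDisk)
    (hre : ∀ z ∈ uDisk, 0 ≤ (W z).re) : DifferentiableOn ℂ (fun z => damping t (W z)) uDisk :=
  (differentiableOn_const _).div ((differentiableOn_const _).add hW) fun z hz =>
    norm_pos_iff.1 (norm_ofReal_add_pos ht (hre z hz))

end Damping

lemma norm_mul_rpow_le_of_norm_rpow_le_sq {p K L : ℝ} {x y v w : ℂ} (hp : 0 ≤ p)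
    (hx : ‖x‖ ≤ K) (hv : ‖v‖ ≤ L) (hy : ‖y‖ ^ p ≤ ‖w‖ ^ 2) :
    ‖x * y‖ ^ p ≤ 2 * L ^ 2 * ‖x‖ ^ p + 2 * K ^ p * ‖w - v‖ ^ (2 : ℝ) := by
  have hsq : ‖w‖ ^ 2 ≤ 2 * L ^ 2 + 2 * ‖w - v‖ ^ 2 := by
    have htri : ‖w‖ ≤ ‖v‖ + ‖w - v‖ := norm_le_norm_add_norm_sub' w v
    nlinarith [norm_nonneg w, sq_nonneg (L - ‖w - v‖)]
  rw [norm_mul, Real.mul_rpow (norm_nonneg _) (norm_nonneg _), Real.rpow_two]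
  calc ‖x‖ ^ p * ‖y‖ ^ p ≤ ‖x‖ ^ p * (2 * L ^ 2 + 2 * ‖w - v‖ ^ 2) := by
        gcongr
        exact hy.trans hsq
    _ = 2 * L ^ 2 * ‖x‖ ^ p + 2 * ‖x‖ ^ p * ‖w - v‖ ^ 2 := by ring
    _ ≤ 2 * L ^ 2 * ‖x‖ ^ p + 2 * K ^ p * ‖w - v‖ ^ 2 := by gcongr

lemma HpNull.mul_of_norm_rpow_le_sq {p K : ℝ} {f : ℂ → ℂ} {c : ℕ → ℂ} {u : ℕ → ℂ → ℂ}
    (hp : 0 ≤ p) (hf : ContinuousOn f uDisk) (hc : Summable fun k => ‖c k‖ ^ 2)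
    (hfc : ∀ z ∈ uDisk, ‖f z‖ ^ p ≤ ‖powerSum c z‖ ^ 2) (hu : HpNull p u)
    (huc : ∀ k, ContinuousOn (u k) uDisk) (hK : ∀ k, ∀ z ∈ uDisk, ‖u k z‖ ≤ K) :
    HpNull p fun k z => u k z * f z := fun ε hε => by
  have hK0 : 0 ≤ K := (norm_nonneg _).trans (hK 0 0 zero_mem_uDisk)
  obtain ⟨m, hm⟩ := (hpNull_two_powerSum_comp_sub_dilatedTrunc (φ := fun z => z) (ρ := fun _ => 1)
    hc (fun _ => ⟨zero_le_one, le_rfl⟩) tendsto_const_nhds tendsto_id differentiableOn_id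
    (mapsTo_id _) rfl (ε / (2 * (2 * K ^ p + 1))) (by positivity)).exists
  set V := dilatedTrunc c 1 m
  obtain ⟨L, hL⟩ := (isCompact_closedBall (0 : ℂ) 1).exists_bound_of_continuousOn V.continuousOn
  obtain ⟨M, hM⟩ := exists_norm_le_of_summable_sq hc
  have hWc : ContinuousOn (powerSum c) uDisk := (differentiableOn_powerSum hM).continuousOn
  filter_upwards [hu (ε / (2 * (2 * L ^ 2 + 1))) (by positivity)] with k hk r hr
  have hsub := sphere_subset_uDisk hr.2
  calc powMean p (fun z => u k z * f z) r
      ≤ 2 * L ^ 2 * powMean p (u k) r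
        + 2 * K ^ p * powMean 2 (fun z => powerSum c z - V.eval z) r :=
        powMean_le_add hp hp zero_le_two hr.1 (((huc k).mul hf).mono hsub) ((huc k).mono hsub)
          ((hWc.sub V.continuousOn).mono hsub) fun z hz =>
          norm_mul_rpow_le_of_norm_rpow_le_sq hp (hK k z (hsub hz))
            (hL z (ball_subset_closedBall (hsub hz))) (hfc z (hsub hz))
    _ ≤ 2 * L ^ 2 * (ε / (2 * (2 * L ^ 2 + 1))) + 2 * K ^ p * (ε / (2 * (2 * K ^ p + 1))) := by
        gcongr
        exacts [hk r hr, hm r hr]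
    _ = ε / 2 * (2 * L ^ 2 / (2 * L ^ 2 + 1)) + ε / 2 * (2 * K ^ p / (2 * K ^ p + 1)) := by
        field_simp
    _ ≤ ε / 2 * 1 + ε / 2 * 1 := by
        gcongr <;> exact (div_le_one (by positivity)).2 (by linarith)
    _ = ε := by ring

lemma hpNull_one_sub_damping_pow {p : ℝ} {c : ℕ → ℂ} (hp : 0 < p)
    (hc : Summable fun k => ‖c k‖ ^ 2) (hre : ∀ z ∈ uDisk, 0 ≤ (powerSum c z).re) (N : ℕ) :
    HpNull p fun k z => 1 - damping (k + 1) (powerSum c z) ^ N := by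
  obtain ⟨M, hM⟩ := exists_norm_le_of_summable_sq hc
  have hW := differentiableOn_powerSum hM
  have hcont : ∀ k : ℕ, ContinuousOn (fun z => 1 - damping (k + 1) (powerSum c z) ^ N) uDisk :=
    fun k => continuousOn_const.sub
      ((differentiableOn_damping_comp k.cast_add_one_pos hW hre).continuousOn.pow N)
  have hlim : Tendsto (fun k : ℕ => ((N : ℝ) / (k + 1)) ^ 2 * ∑' j, ‖c j‖ ^ 2) atTop (𝓝 0) := by
    have hdiv : Tendsto (fun k : ℕ => (N : ℝ) / (k + 1)) atTop (𝓝 0) := by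
      simpa [div_eq_mul_inv] using
        (tendsto_one_div_add_atTop_nhds_zero_nat (𝕜 := ℝ)).const_mul (N : ℝ)
    simpa using (hdiv.pow 2).mul_const (∑' j, ‖c j‖ ^ 2)
  refine HpNull.of_two_of_bounded hp (.of_tendsto hlim fun k r hr => ?_) hcont fun k z hz =>
    norm_one_sub_damping_pow_le_two k.cast_add_one_pos (hre z hz) N
  have hsub := sphere_subset_uDisk hr.2
  calc powMean 2 (fun z => 1 - damping (k + 1) (powerSum c z) ^ N) r
      ≤ ((N : ℝ) / (k + 1)) ^ 2 * powMean 2 (powerSum c) r := by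
        refine powMean_le_mul zero_le_two zero_le_two hr.1 ((hcont k).mono hsub)
          (hW.continuousOn.mono hsub) fun z hz => ?_
        rw [Real.rpow_two, Real.rpow_two, ← mul_pow]
        gcongr
        exact norm_one_sub_damping_pow_le k.cast_add_one_pos (hre z (hsub hz)) N
    _ ≤ ((N : ℝ) / (k + 1)) ^ 2 * ∑' j, ‖c j‖ ^ 2 := by
        gcongr
        exact powMean_two_powerSum_comp_le_tsum hc differentiableOn_id (mapsTo_id _) rfl hr

theorem exists_memHinf_seq_hpNull_sub {p C : ℝ} {f : ℂ → ℂ} (hp : 0 < p)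
    (hf : DifferentiableOn ℂ f uDisk) (hC : ∀ r ∈ Ico (0 : ℝ) 1, powMean p f r ≤ C) :
    ∃ u : ℕ → ℂ → ℂ, (∀ k, MemHinf (u k)) ∧ HpNull p fun k z => f z - u k z := by
  obtain ⟨c, hc, hmaj⟩ := exists_re_powerSum_majorant hp hf hC
  have hre : ∀ z ∈ uDisk, 0 ≤ (powerSum c z).re := fun z hz =>
    (Real.rpow_nonneg (norm_nonneg _) _).trans (hmaj z hz)
  obtain ⟨M, hM⟩ := exists_norm_le_of_summable_sq hc
  have hdamp : ∀ k : ℕ, DifferentiableOn ℂ (fun z => damping (k + 1) (powerSum c z)) uDisk :=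
    fun k => differentiableOn_damping_comp k.cast_add_one_pos (differentiableOn_powerSum hM) hre
  obtain ⟨N, hN⟩ := exists_nat_ge (2 / p)
  refine ⟨fun k z => f z * damping (k + 1) (powerSum c z) ^ N, fun k =>
    ⟨hf.mul ((hdamp k).pow N), (k + 1) ^ N, fun z hz =>
      norm_mul_damping_pow_le hp hN (by simp) (hmaj z hz)⟩, ?_⟩
  refine HpNull.congr (HpNull.mul_of_norm_rpow_le_sq hp.le hf.continuousOn hc (fun z hz => ?_)
    (hpNull_one_sub_damping_pow hp hc hre N)
    (fun k => continuousOn_const.sub ((hdamp k).continuousOn.pow N)) fun k z hz =>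
      norm_one_sub_damping_pow_le_two k.cast_add_one_pos (hre z hz) N) fun k z _ => by ring
  rw [rpow_eq_sq_rpow_half (norm_nonneg _)]
  gcongr
  exact (hmaj z hz).trans (Complex.re_le_norm _)

/-! ### Bounded limits of an algebra of functions -/

lemma coe_adjoin_pair_eq_algGen2 (F G : ℂ → ℂ) :
    (Algebra.adjoin ℂ {F, G} : Set (ℂ → ℂ)) = algGen2 F G := by
  have haeval : ∀ (P : MvPolynomial (Fin 2) ℂ) (z : ℂ),
      MvPolynomial.aeval ![F, G] P z = MvPolynomial.eval (fun i => ![F, G] i z) P := fun P z => by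
    rw [← MvPolynomial.coe_aeval_eq_eval]
    exact MvPolynomial.comp_aeval_apply ![F, G] (Pi.evalAlgHom ℂ (fun _ : ℂ => ℂ) z) P
  ext h
  rw [← Matrix.range_cons_cons_empty F G ![], Algebra.adjoin_range_eq_range_aeval]
  simp only [algGen2, algGen, SetLike.mem_coe, AlgHom.mem_range, mem_ofPred_eq, funext_iff, haeval,
    eq_comm]

namespace MemHinf

variable {F G : ℂ → ℂ}

lemma add (hF : MemHinf F) (hG : MemHinf G) : MemHinf (F + G) := by
  obtain ⟨hFd, K, hK⟩ := hF
  obtain ⟨hGd, L, hL⟩ := hG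
  exact ⟨hFd.add hGd, K + L, fun z hz => norm_add_le_of_le (hK z hz) (hL z hz)⟩

lemma mul (hF : MemHinf F) (hG : MemHinf G) : MemHinf (F * G) := by
  obtain ⟨hFd, K, hK⟩ := hF
  obtain ⟨hGd, L, hL⟩ := hG
  exact ⟨hFd.mul hGd, K * L, fun z hz => norm_mul_le_of_le (hK z hz) (hL z hz)⟩

lemma const (c : ℂ) : MemHinf fun _ => c := ⟨differentiableOn_const c, ‖c‖, fun _ _ => le_rfl⟩

end MemHinf

/-- `F` is a bounded limit of the algebra `A`: it lies in `H^∞` and is the limit in quadratic mean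
of a uniformly bounded sequence in `A`. -/
def IsBoundedLimit (A : Subalgebra ℂ (ℂ → ℂ)) (F : ℂ → ℂ) : Prop :=
  MemHinf F ∧ ∃ (u : ℕ → ℂ → ℂ) (K : ℝ),
    (∀ k, u k ∈ A ∧ ContinuousOn (u k) uDisk ∧ ∀ z ∈ uDisk, ‖u k z‖ ≤ K) ∧
      HpNull 2 fun k => F - u k

namespace IsBoundedLimit

variable {A : Subalgebra ℂ (ℂ → ℂ)} {F G : ℂ → ℂ}

lemma of_mem (hF : MemHinf F) (hFA : F ∈ A) : IsBoundedLimit A F := by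
  obtain ⟨hFd, K, hK⟩ := hF
  refine ⟨⟨hFd, K, hK⟩, fun _ => F, K, fun _ => ⟨hFA, hFd.continuousOn, hK⟩,
    .of_tendsto tendsto_const_nhds fun _ r _ => ?_⟩
  rw [sub_self]
  exact (powMean_const 2 0 r).trans_le (by simp)

lemma congr (hF : IsBoundedLimit A F) (hGF : EqOn G F uDisk) : IsBoundedLimit A G := by
  obtain ⟨⟨hFd, K, hK⟩, u, L, hu, hnull⟩ := hF
  exact ⟨⟨hFd.congr hGF, K, fun z hz => hGF hz ▸ hK z hz⟩, u, L, hu,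
    hnull.congr fun k z hz => by simp only [Pi.sub_apply, hGF hz]⟩

lemma add (hF : IsBoundedLimit A F) (hG : IsBoundedLimit A G) : IsBoundedLimit A (F + G) := by
  obtain ⟨hFinf, u, K, hu, hunull⟩ := hF
  obtain ⟨hGinf, v, L, hv, hvnull⟩ := hG
  refine ⟨hFinf.add hGinf, u + v, K + L, fun k => ⟨A.add_mem (hu k).1 (hv k).1,
    (hu k).2.1.add (hv k).2.1, fun z hz => norm_add_le_of_le ((hu k).2.2 z hz) ((hv k).2.2 z hz)⟩,
    ?_⟩
  refine (hunull.add zero_le_two hvnull (fun k => hFinf.1.continuousOn.sub (hu k).2.1)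
    fun k => hGinf.1.continuousOn.sub (hv k).2.1).congr fun k z _ => ?_
  simp only [Pi.add_apply, Pi.sub_apply]
  ring

lemma mul (hF : IsBoundedLimit A F) (hG : IsBoundedLimit A G) : IsBoundedLimit A (F * G) := by
  obtain ⟨hFinf, u, K, hu, hunull⟩ := hF
  obtain ⟨hGinf, v, L, hv, hvnull⟩ := hG
  obtain ⟨M, hM⟩ := hGinf.2
  refine ⟨hFinf.mul hGinf, u * v, K * L, fun k => ⟨A.mul_mem (hu k).1 (hv k).1,
    (hu k).2.1.mul (hv k).2.1, fun z hz => norm_mul_le_of_le ((hu k).2.2 z hz) ((hv k).2.2 z hz)⟩,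
    ?_⟩
  have hFu : ∀ k, ContinuousOn (F - u k) uDisk := fun k => hFinf.1.continuousOn.sub (hu k).2.1
  have hGv : ∀ k, ContinuousOn (G - v k) uDisk := fun k => hGinf.1.continuousOn.sub (hv k).2.1
  have hGFu : HpNull 2 fun k => G * (F - u k) :=
    hunull.mul zero_le_two hFu (fun _ => hGinf.1.continuousOn) fun _ => hM
  have huGv : HpNull 2 fun k => u k * (G - v k) :=
    hvnull.mul zero_le_two hGv (fun k => (hu k).2.1) fun k => (hu k).2.2
  refine (hGFu.add zero_le_two huGv (fun k => hGinf.1.continuousOn.mul (hFu k))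
    fun k => (hu k).2.1.mul (hGv k)).congr fun k z _ => ?_
  simp only [Pi.add_apply, Pi.sub_apply, Pi.mul_apply]
  ring

lemma comp {c φ : ℂ → ℂ} (hc : MemHinf c) (hφ : DifferentiableOn ℂ φ uDisk)
    (hmaps : MapsTo φ uDisk uDisk) (h0 : φ 0 = 0) (hφA : φ ∈ A) :
    IsBoundedLimit A fun z => c (φ z) := by
  obtain ⟨hcd, M, hM⟩ := hc
  obtain ⟨P, hP, hnull⟩ := exists_bounded_polynomial_approx hcd hM
  refine ⟨⟨hcd.comp hφ hmaps, M, fun z hz => hM _ (hmaps hz)⟩, fun m z => (P m).eval (φ z), M + 1,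
    fun m => ⟨?_, (P m).continuous.comp_continuousOn hφ.continuousOn, fun z hz =>
      hP m _ (hmaps hz)⟩, hnull φ hφ hmaps h0⟩
  convert (aeval (⟨φ, hφA⟩ : A) (P m)).2 using 1
  rw [coe_aeval_mk_apply]
  exact funext fun z => (aeval_fn_apply (P m) φ z).symm

end IsBoundedLimit

/-- The algebra of all bounded limits of `A`. -/
def boundedLimits (A : Subalgebra ℂ (ℂ → ℂ)) : Subalgebra ℂ (ℂ → ℂ) where
  carrier := {F | IsBoundedLimit A F}
  mul_mem' := IsBoundedLimit.mul
  add_mem' := IsBoundedLimit.add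
  algebraMap_mem' c := .of_mem (.const c) (A.algebraMap_mem c)

lemma mem_hpClosure_of_forall_pos {p : ℝ} {f : ℂ → ℂ} {S : Set (ℂ → ℂ)} (hp : 0 < p)
    (hf : MemHp p f)
    (happrox : ∀ ε > 0, ∃ u ∈ S, ∀ r ∈ Ico (0 : ℝ) 1, powMean p (fun z => f z - u z) r ≤ ε) :
    f ∈ hpClosure p S := by
  choose u hu hmean using fun k : ℕ => happrox (1 / ((k : ℝ) + 1)) (by positivity)
  have hsup : ∀ k, sSup {m | ∃ r ∈ Ico (0 : ℝ) 1, m = circMean p (fun z => f z - u k z) r}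
      ≤ 2 * Real.pi * (1 / ((k : ℝ) + 1)) := fun k => by
    refine Real.sSup_le ?_ (by positivity)
    rintro _ ⟨r, hr, rfl⟩
    rw [circMean_eq_two_pi_mul_powMean]
    gcongr
    exact hmean k r hr
  have hnonneg : ∀ k, 0 ≤ sSup {m | ∃ r ∈ Ico (0 : ℝ) 1, m = circMean p (fun z => f z - u k z) r} :=
    fun k => Real.sSup_nonneg <| by
      rintro _ ⟨r, -, rfl⟩
      rw [circMean_eq_two_pi_mul_powMean]
      exact mul_nonneg Real.two_pi_pos.le (powMean_nonneg _ _ _)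
  have hlim := squeeze_zero hnonneg hsup
    (by simpa using tendsto_one_div_add_atTop_nhds_zero_nat.const_mul (2 * Real.pi))
  refine ⟨hf, u, hu, ?_⟩
  simpa [hpNorm, Real.zero_rpow (inv_ne_zero hp.ne')] using
    hlim.rpow_const (p := 1 / p) (Or.inr (by positivity))

lemma MemHp.exists_powMean_le {p : ℝ} {f : ℂ → ℂ} (hf : MemHp p f) :
    ∃ C, ∀ r ∈ Ico (0 : ℝ) 1, powMean p f r ≤ C := by
  obtain ⟨-, C, hC⟩ := hf
  refine ⟨C / (2 * Real.pi), fun r hr => ?_⟩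
  rw [le_div_iff₀' Real.two_pi_pos, ← circMean_eq_two_pi_mul_powMean]
  exact hC r hr

lemma MemHp.mul_left {p : ℝ} {f Φ : ℂ → ℂ} (hp : 0 ≤ p) (hf : MemHp p f) (hΦ : MemHinf Φ) :
    MemHp p fun z => Φ z * f z := by
  obtain ⟨hΦd, M, hM⟩ := hΦ
  have hM0 : 0 ≤ M := (norm_nonneg _).trans (hM 0 zero_mem_uDisk)
  obtain ⟨C, hC⟩ := hf.exists_powMean_le
  refine ⟨hΦd.mul hf.1, 2 * Real.pi * (M ^ p * C), fun r hr => ?_⟩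
  have hsub := sphere_subset_uDisk hr.2
  rw [circMean_eq_two_pi_mul_powMean]
  refine mul_le_mul_of_nonneg_left ?_ Real.two_pi_pos.le
  refine (powMean_le_mul (a := M ^ p) hp hp hr.1 ((hΦd.mul hf.1).continuousOn.mono hsub)
    (hf.1.continuousOn.mono hsub) fun z hz => ?_).trans (by gcongr; exact hC r hr)
  rw [Pi.mul_apply, norm_mul, Real.mul_rpow (norm_nonneg _) (norm_nonneg _)]
  gcongr
  exact hM z (hsub hz)

lemma IsBoundedLimit.exists_powMean_sub_le {A : Subalgebra ℂ (ℂ → ℂ)} {F : ℂ → ℂ} {p ε : ℝ}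
    (hF : IsBoundedLimit A F) (hp : 0 < p) (hε : 0 < ε) :
    ∃ u ∈ A, ContinuousOn u uDisk ∧ ∀ r ∈ Ico (0 : ℝ) 1, powMean p (F - u) r ≤ ε := by
  obtain ⟨⟨hFd, K, hK⟩, u, L, hu, hnull⟩ := hF
  obtain ⟨k, hk⟩ := (hnull.of_two_of_bounded hp (fun k => hFd.continuousOn.sub (hu k).2.1)
    (fun k z hz => norm_sub_le_of_le (hK z hz) ((hu k).2.2 z hz)) ε hε).exists
  exact ⟨u k, (hu k).1, (hu k).2.1, hk⟩

theorem mul_mem_hpClosure_of_forall_memHinf {A : Subalgebra ℂ (ℂ → ℂ)} {Φ h : ℂ → ℂ} {p : ℝ}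
    (hp : 0 < p) (hΦ : MemHinf Φ) (hlim : ∀ v, MemHinf v → (fun z => Φ z * v z) ∈ boundedLimits A)
    (hh : MemHp p h) : (fun z => Φ z * h z) ∈ hpClosure p (A : Set (ℂ → ℂ)) := by
  refine mem_hpClosure_of_forall_pos hp (hh.mul_left hp.le hΦ) fun ε hε => ?_
  obtain ⟨C, hC⟩ := hh.exists_powMean_le
  obtain ⟨M, hM⟩ := hΦ.2
  obtain ⟨v, hv, hnull⟩ := exists_memHinf_seq_hpNull_sub hp hh.1 hC
  have hhv : ∀ k, ContinuousOn (fun z => h z - v k z) uDisk := fun k =>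
    hh.1.continuousOn.sub (hv k).1.continuousOn
  have hε' : 0 < ε / (2 ^ p + 2 ^ p) := by positivity
  obtain ⟨k, hk⟩ := (hnull.mul (m := fun _ => Φ) hp.le hhv (fun _ => hΦ.1.continuousOn)
    (fun _ => hM) _ hε').exists
  obtain ⟨u, huA, huc, hu⟩ := IsBoundedLimit.exists_powMean_sub_le (hlim _ (hv k)) hp hε'
  refine ⟨u, huA, fun r hr => ?_⟩
  have hsub := sphere_subset_uDisk hr.2
  have hΦc := hΦ.1.continuousOn
  calc powMean p (fun z => Φ z * h z - u z) r
      ≤ 2 ^ p * powMean p (fun z => Φ z * (h z - v k z)) r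
        + 2 ^ p * powMean p (fun z => Φ z * v k z - u z) r := by
        refine powMean_le_add hp.le hp.le hp.le hr.1
          (((hΦc.mul hh.1.continuousOn).sub huc).mono hsub) ((hΦc.mul (hhv k)).mono hsub)
          (((hΦc.mul (hv k).1.continuousOn).sub huc).mono hsub) fun z _ => ?_
        rw [show Φ z * h z - u z = Φ z * (h z - v k z) + (Φ z * v k z - u z) by ring]
        exact norm_add_rpow_le hp.le _ _
    _ ≤ 2 ^ p * (ε / (2 ^ p + 2 ^ p)) + 2 ^ p * (ε / (2 ^ p + 2 ^ p)) := by
        gcongr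
        exacts [hk r hr, hu r hr]
    _ = ε := by field_simp

/-! ### Blaschke products and their fibres -/

lemma one_sub_conj_mul_ne_zero {c w : ℂ} (hc : ‖c‖ < 1) (hw : ‖w‖ ≤ 1) :
    1 - (starRingEnd ℂ) c * w ≠ 0 := by
  intro h
  have hone : ‖c‖ * ‖w‖ = 1 := by
    rw [← RCLike.norm_conj c, ← norm_mul, ← sub_eq_zero.mp h, norm_one]
  nlinarith [norm_nonneg c, norm_nonneg w]

lemma norm_one_sub_conj_mul_sq_sub (c w : ℂ) :
    ‖1 - (starRingEnd ℂ) c * w‖ ^ 2 - ‖w - c‖ ^ 2 = (1 - ‖c‖ ^ 2) * (1 - ‖w‖ ^ 2) := by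
  simp only [← Complex.normSq_eq_norm_sq, Complex.normSq_apply, sub_re, sub_im, mul_re, mul_im,
    conj_re, conj_im, one_re, one_im]
  ring

lemma norm_sub_lt_norm_one_sub_conj_mul {c w : ℂ} (hc : ‖c‖ < 1) (hw : ‖w‖ < 1) :
    ‖w - c‖ < ‖1 - (starRingEnd ℂ) c * w‖ := by
  refine lt_of_pow_lt_pow_left₀ 2 (norm_nonneg _) ?_
  have hc2 : 0 < 1 - ‖c‖ ^ 2 := by nlinarith [norm_nonneg c]
  have hw2 : 0 < 1 - ‖w‖ ^ 2 := by nlinarith [norm_nonneg w]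
  linarith [norm_one_sub_conj_mul_sq_sub c w, mul_pos hc2 hw2]

lemma norm_one_sub_conj_mul_le_norm_sub {c w : ℂ} (hc : ‖c‖ < 1) (hw : 1 ≤ ‖w‖) :
    ‖1 - (starRingEnd ℂ) c * w‖ ≤ ‖w - c‖ := by
  refine le_of_sq_le_sq ?_ (norm_nonneg _)
  have hc2 : 0 ≤ 1 - ‖c‖ ^ 2 := by nlinarith [norm_nonneg c]
  have hw2 : 0 ≤ ‖w‖ ^ 2 - 1 := by nlinarith [norm_nonneg w]
  linarith [norm_one_sub_conj_mul_sq_sub c w, mul_nonneg hc2 hw2]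

lemma norm_one_sub_conj_mul_eq_norm_sub (c : ℂ) {w : ℂ} (hw : ‖w‖ = 1) :
    ‖1 - (starRingEnd ℂ) c * w‖ = ‖w - c‖ := by
  have h := norm_one_sub_conj_mul_sq_sub c w
  rw [hw] at h
  exact (sq_eq_sq₀ (norm_nonneg _) (norm_nonneg _)).mp (by linarith)

lemma eval_derivative_prod {ι K : Type*} [Field K] (s : Finset ι) (f : ι → K[X]) {w : K}
    (hf : ∀ j ∈ s, (f j).eval w ≠ 0) :
    (derivative (∏ j ∈ s, f j)).eval w
      = (∏ j ∈ s, f j).eval w * ∑ j ∈ s, (derivative (f j)).eval w / (f j).eval w := by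
  rw [derivative_prod_finset, eval_finsetSum, Finset.mul_sum]
  refine Finset.sum_congr rfl fun j hj => ?_
  rw [← Finset.mul_prod_erase s f hj, eval_mul, eval_mul]
  field_simp [hf j hj]

lemma exists_eq_prod_X_sub_C {K : Type*} [Field K] {q : K[X]} {n : ℕ} (hq : q.Monic)
    (hsplits : q.Splits) (hn : q.natDegree = n) : ∃ φ : Fin n → K, q = ∏ j, (X - C (φ j)) := by
  obtain ⟨l, hl⟩ : ∃ l : List K, (l : Multiset K) = q.roots := Quotient.exists_rep _
  have hlen : l.length = n := by
    rw [← hn, hsplits.natDegree_eq_card_roots, ← hl, Multiset.coe_card]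
  subst hlen
  have hroots : q.roots = Finset.univ.val.map l.get := by
    rw [← hl, Fin.univ_val_map, List.ofFn_get]
  refine ⟨l.get, ?_⟩
  rw [hsplits.eq_prod_roots_of_monic hq, hroots, Multiset.map_map]
  rfl

lemma exists_pos_forall_le_or_le {α : Type*} [TopologicalSpace α] {K : Set α} (hK : IsCompact K)
    {f g : α → ℝ} (hf : ContinuousOn f K) (hg : ContinuousOn g K)
    (h : ∀ w ∈ K, 0 < f w ∨ 0 < g w) : ∃ c > 0, ∀ w ∈ K, c ≤ f w ∨ c ≤ g w := by
  rcases K.eq_empty_or_nonempty with rfl | hne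
  · exact ⟨1, one_pos, by simp⟩
  obtain ⟨x, hx, hmin⟩ := hK.exists_isMinOn hne (hf.sup hg)
  exact ⟨max (f x) (g x), lt_max_iff.mpr (h x hx), fun w hw => le_max_iff.mp (hmin hw)⟩

/-- The numerator of the Blaschke product with zeros `a`, normalised to be monic. -/
def blaschkeNum {n : ℕ} (a : Fin n → ℂ) : ℂ[X] := ∏ j, (X - C (a j))

/-- The denominator of the Blaschke product with zeros `a`. -/
def blaschkeDenom {n : ℕ} (a : Fin n → ℂ) : ℂ[X] := ∏ j, (1 - C ((starRingEnd ℂ) (a j)) * X)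

/-- The polynomial whose roots are the solutions `w` of `B(w) = b`. The sign makes it monic as soon
as some `a_j` vanishes. -/
def fiberPoly {n : ℕ} (a : Fin n → ℂ) (b : ℂ) : ℂ[X] :=
  blaschkeNum a - C ((-1) ^ n * b) * blaschkeDenom a

/-- The derivative of `fiberPoly a (B w)` at its root `w`, as a function of `w`. -/
def fiberDeriv {n : ℕ} (a : Fin n → ℂ) (w : ℂ) : ℂ :=
  (derivative (fiberPoly a (blaschke a w))).eval w

section Fibers

variable {n : ℕ} {a : Fin n → ℂ}

lemma norm_lt_one_of_mem_uDisk {w : ℂ} (hw : w ∈ uDisk) : ‖w‖ < 1 := mem_ball_zero_iff.mp hw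

lemma eval_blaschkeDenom (a : Fin n → ℂ) (w : ℂ) :
    (blaschkeDenom a).eval w = ∏ j, (1 - (starRingEnd ℂ) (a j) * w) := by
  simp [blaschkeDenom, eval_prod]

lemma eval_blaschkeNum (a : Fin n → ℂ) (w : ℂ) : (blaschkeNum a).eval w = ∏ j, (w - a j) := by
  simp [blaschkeNum, eval_prod]

lemma blaschke_eq_num_div_denom (a : Fin n → ℂ) (w : ℂ) :
    blaschke a w = (-1) ^ n * (blaschkeNum a).eval w / (blaschkeDenom a).eval w := by
  have hneg : ∏ j, (a j - w) = (-1) ^ n * ∏ j, (w - a j) := by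
    simpa using Finset.prod_neg (s := Finset.univ) fun j => w - a j
  rw [blaschke, Finset.prod_div_distrib, eval_blaschkeDenom, eval_blaschkeNum, hneg]

lemma eval_blaschkeDenom_ne_zero (ha : ∀ j, a j ∈ uDisk) {w : ℂ} (hw : ‖w‖ ≤ 1) :
    (blaschkeDenom a).eval w ≠ 0 := by
  rw [eval_blaschkeDenom]
  exact Finset.prod_ne_zero_iff.mpr fun j _ =>
    one_sub_conj_mul_ne_zero (norm_lt_one_of_mem_uDisk (ha j)) hw

lemma sub_ne_zero_of_one_le_norm {c w : ℂ} (hc : c ∈ uDisk) (hw : 1 ≤ ‖w‖) : w - c ≠ 0 := by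
  intro h
  rw [sub_eq_zero.mp h] at hw
  exact hw.not_gt (norm_lt_one_of_mem_uDisk hc)

lemma eval_blaschkeNum_ne_zero (ha : ∀ j, a j ∈ uDisk) {w : ℂ} (hw : 1 ≤ ‖w‖) :
    (blaschkeNum a).eval w ≠ 0 := by
  rw [eval_blaschkeNum]
  exact Finset.prod_ne_zero_iff.mpr fun j _ => sub_ne_zero_of_one_le_norm (ha j) hw

lemma mapsTo_blaschke (ha : ∀ j, a j ∈ uDisk) (hn : 0 < n) :
    MapsTo (blaschke a) uDisk uDisk := by
  intro w hw
  have hw1 := norm_lt_one_of_mem_uDisk hw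
  rw [uDisk, mem_ball_zero_iff]
  by_cases hzero : ∃ j, a j = w
  · obtain ⟨j, hj⟩ := hzero
    rw [blaschke, Finset.prod_eq_zero (Finset.mem_univ j) (by simp [hj])]
    simp
  · push Not at hzero
    have hdenom := fun j => one_sub_conj_mul_ne_zero (norm_lt_one_of_mem_uDisk (ha j)) hw1.le
    calc ‖blaschke a w‖ = ∏ j, ‖(a j - w) / (1 - (starRingEnd ℂ) (a j) * w)‖ := norm_prod _ _
      _ < ∏ _j : Fin n, (1 : ℝ) := by
        refine Finset.prod_lt_prod_of_nonempty (fun j _ => ?_) (fun j _ => ?_)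
          ⟨⟨0, hn⟩, Finset.mem_univ _⟩
        · exact norm_pos_iff.mpr (div_ne_zero (sub_ne_zero.mpr (hzero j)) (hdenom j))
        · rw [norm_div, div_lt_one (norm_pos_iff.mpr (hdenom j)), norm_sub_rev]
          exact norm_sub_lt_norm_one_sub_conj_mul (norm_lt_one_of_mem_uDisk (ha j)) hw1
      _ = 1 := Finset.prod_const_one

lemma norm_blaschke_of_norm_eq_one (ha : ∀ j, a j ∈ uDisk) {w : ℂ} (hw : ‖w‖ = 1) :
    ‖blaschke a w‖ = 1 := by
  rw [blaschke, norm_prod]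
  refine Finset.prod_eq_one fun j _ => ?_
  rw [norm_div, norm_sub_rev, norm_one_sub_conj_mul_eq_norm_sub _ hw]
  exact div_self (norm_ne_zero_iff.mpr (sub_ne_zero_of_one_le_norm (ha j) hw.ge))

lemma blaschke_zero (h0 : ∃ j, a j = 0) : blaschke a 0 = 0 := by
  obtain ⟨j, hj⟩ := h0
  exact Finset.prod_eq_zero (Finset.mem_univ j) (by simp [hj])

lemma continuousOn_blaschke (ha : ∀ j, a j ∈ uDisk) :
    ContinuousOn (blaschke a) (closedBall 0 1) := by
  rw [funext (blaschke_eq_num_div_denom a)]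
  exact (by fun_prop : Continuous fun w => (-1) ^ n * (blaschkeNum a).eval w).continuousOn.div
    (blaschkeDenom a).continuous.continuousOn
    fun w hw => eval_blaschkeDenom_ne_zero ha (mem_closedBall_zero_iff.mp hw)

lemma differentiableOn_blaschke (ha : ∀ j, a j ∈ uDisk) :
    DifferentiableOn ℂ (blaschke a) uDisk := by
  rw [funext (blaschke_eq_num_div_denom a)]
  exact ((blaschkeNum a).differentiable.const_mul _).differentiableOn.div
    (blaschkeDenom a).differentiable.differentiableOn
    fun w hw => eval_blaschkeDenom_ne_zero ha (norm_lt_one_of_mem_uDisk hw).le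

lemma degree_blaschkeNum (a : Fin n → ℂ) : (blaschkeNum a).degree = n := by
  simp [blaschkeNum, degree_prod]

lemma degree_blaschkeDenom_lt (h0 : ∃ j, a j = 0) : (blaschkeDenom a).degree < (n : WithBot ℕ) := by
  obtain ⟨j, hj⟩ := h0
  have hfactor : ∀ k ∈ Finset.univ.erase j,
      (1 - C ((starRingEnd ℂ) (a k)) * X : ℂ[X]).degree ≤ 1 := fun k _ =>
    (degree_sub_le _ _).trans
      (max_le (degree_one_le.trans zero_le_one) (degree_C_mul_X_le _))
  rw [blaschkeDenom, ← Finset.mul_prod_erase _ _ (Finset.mem_univ j), hj, map_zero, map_zero,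
    zero_mul, sub_zero, one_mul]
  refine ((degree_prod_le _ _).trans (Finset.sum_le_sum hfactor)).trans_lt ?_
  simp only [Finset.sum_const, Finset.card_erase_of_mem (Finset.mem_univ j), Finset.card_univ,
    Fintype.card_fin, nsmul_eq_mul, mul_one]
  exact_mod_cast Nat.sub_lt j.pos one_pos

lemma degree_C_mul_blaschkeDenom_lt (h0 : ∃ j, a j = 0) (c : ℂ) :
    (C c * blaschkeDenom a).degree < (blaschkeNum a).degree := by
  rw [degree_blaschkeNum, ← smul_eq_C_mul]
  exact (degree_smul_le _ _).trans_lt (degree_blaschkeDenom_lt h0)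

lemma monic_fiberPoly (h0 : ∃ j, a j = 0) (b : ℂ) : (fiberPoly a b).Monic :=
  (monic_prod_X_sub_C a _ : (blaschkeNum a).Monic).sub_of_left (degree_C_mul_blaschkeDenom_lt h0 _)

lemma degree_fiberPoly (h0 : ∃ j, a j = 0) (b : ℂ) : (fiberPoly a b).degree = n := by
  rw [fiberPoly, degree_sub_eq_left_of_degree_lt (degree_C_mul_blaschkeDenom_lt h0 _),
    degree_blaschkeNum]

lemma natDegree_fiberPoly (h0 : ∃ j, a j = 0) (b : ℂ) : (fiberPoly a b).natDegree = n :=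
  natDegree_eq_of_degree_eq_some (degree_fiberPoly h0 b)

lemma fiberMS_eq_roots_fiberPoly (a : Fin n → ℂ) (z : ℂ) :
    fiberMS a z = (fiberPoly a (blaschke a z)).roots := by
  have hneg : ∏ j, (C (a j) - X) = C ((-1) ^ n) * blaschkeNum a := by
    rw [blaschkeNum, Finset.prod_congr rfl fun j _ => (neg_sub X (C (a j))).symm, Finset.prod_neg]
    simp
  have hsign : C ((-1 : ℂ) ^ n) * C ((-1) ^ n) = 1 := by
    rw [← C_mul, pow_mul_pow_eq_one n (by norm_num), C_1]
  have hfactor : ∏ j, (C (a j) - X) - C (blaschke a z) * blaschkeDenom a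
      = C ((-1) ^ n) * fiberPoly a (blaschke a z) := by
    rw [hneg, fiberPoly, C_mul]
    linear_combination C (blaschke a z) * blaschkeDenom a * hsign
  rw [fiberMS, ← blaschkeDenom, hfactor, roots_C_mul _ (by simp)]

lemma eval_fiberPoly (a : Fin n → ℂ) (b w : ℂ) :
    (fiberPoly a b).eval w
      = (blaschkeNum a).eval w - (-1) ^ n * b * (blaschkeDenom a).eval w := by
  simp [fiberPoly]

lemma eval_fiberPoly_eq_zero_iff (ha : ∀ j, a j ∈ uDisk) {b w : ℂ} (hw : ‖w‖ ≤ 1) :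
    (fiberPoly a b).eval w = 0 ↔ blaschke a w = b := by
  have hsign : (-1 : ℂ) ^ n * (-1) ^ n = 1 := pow_mul_pow_eq_one n (by norm_num)
  rw [blaschke_eq_num_div_denom, div_eq_iff (eval_blaschkeDenom_ne_zero ha hw), eval_fiberPoly]
  constructor <;> intro h
  · linear_combination (-1) ^ n * h + b * (blaschkeDenom a).eval w * hsign
  · linear_combination (-1) ^ n * h - (blaschkeNum a).eval w * hsign

lemma mem_uDisk_of_eval_fiberPoly_eq_zero (ha : ∀ j, a j ∈ uDisk) {b w : ℂ} (hb : ‖b‖ < 1)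
    (hw : (fiberPoly a b).eval w = 0) : w ∈ uDisk := by
  rw [uDisk, mem_ball_zero_iff]
  by_contra! hw1
  have hnorm : ‖(blaschkeNum a).eval w‖ = ‖b‖ * ‖(blaschkeDenom a).eval w‖ := by
    rw [eval_fiberPoly] at hw
    simp [sub_eq_zero.mp hw]
  have hle : ‖(blaschkeDenom a).eval w‖ ≤ ‖(blaschkeNum a).eval w‖ := by
    rw [eval_blaschkeNum, eval_blaschkeDenom, norm_prod, norm_prod]
    exact Finset.prod_le_prod (fun _ _ => norm_nonneg _) fun j _ =>
      norm_one_sub_conj_mul_le_norm_sub (norm_lt_one_of_mem_uDisk (ha j)) hw1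
  have hpos := norm_pos_iff.mpr (eval_blaschkeNum_ne_zero ha hw1)
  nlinarith [norm_nonneg b]

lemma fiberDeriv_eq (a : Fin n → ℂ) (w : ℂ) :
    fiberDeriv a w = (derivative (blaschkeNum a)).eval w
      - (-1) ^ n * blaschke a w * (derivative (blaschkeDenom a)).eval w := by
  rw [fiberDeriv, fiberPoly, derivative_sub, derivative_C_mul, eval_sub, eval_mul, eval_C]

lemma fiberDeriv_eq_prod_sub {φ : Fin n → ℂ} {b : ℂ} (hφ : fiberPoly a b = ∏ j, (X - C (φ j)))
    (j : Fin n) (hb : blaschke a (φ j) = b) :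
    fiberDeriv a (φ j) = ∏ k ∈ Finset.univ.erase j, (φ j - φ k) := by
  have hnodal : fiberPoly a b = Lagrange.nodal Finset.univ φ := hφ
  rw [fiberDeriv, hb, hnodal, Lagrange.eval_nodal_derivative_eval_node_eq (Finset.mem_univ j),
    Lagrange.eval_nodal]

lemma mul_logDeriv_blaschke_factor {c w : ℂ} (hw : ‖w‖ = 1) (hcw : w - c ≠ 0) :
    w * (1 / (w - c) - -(starRingEnd ℂ) c / (1 - (starRingEnd ℂ) c * w))
      = (((1 - ‖c‖ ^ 2) / ‖w - c‖ ^ 2 : ℝ) : ℂ) := by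
  have hww : w * (starRingEnd ℂ) w = 1 := by
    rw [Complex.mul_conj, Complex.normSq_eq_norm_sq, hw]
    simp
  have hw0 : w ≠ 0 := left_ne_zero_of_mul_eq_one hww
  have hconj : (starRingEnd ℂ) (w - c) ≠ 0 := (_root_.map_ne_zero _).mpr hcw
  have hdenom : 1 - (starRingEnd ℂ) c * w = w * (starRingEnd ℂ) (w - c) := by
    rw [map_sub]
    linear_combination -hww
  push_cast
  rw [hdenom, ← Complex.mul_conj' (w - c), ← Complex.mul_conj' c]
  field_simp [hcw]
  rw [map_sub]
  linear_combination hww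

/-- On the unit circle `w B'(w) / B(w) = ∑_j (1 - |a_j|²) / |w - a_j|²`. -/
lemma mul_fiberDeriv_eq (ha : ∀ j, a j ∈ uDisk) {w : ℂ} (hw : ‖w‖ = 1) :
    w * fiberDeriv a w
      = (blaschkeNum a).eval w * ((∑ j, (1 - ‖a j‖ ^ 2) / ‖w - a j‖ ^ 2 : ℝ) : ℂ) := by
  have hsub := fun j => sub_ne_zero_of_one_le_norm (ha j) hw.ge
  have hdenom := fun j => one_sub_conj_mul_ne_zero (norm_lt_one_of_mem_uDisk (ha j)) hw.le
  have hnum' : (derivative (blaschkeNum a)).eval w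
      = (blaschkeNum a).eval w * ∑ j, 1 / (w - a j) := by
    rw [blaschkeNum, eval_derivative_prod _ _ (fun j _ => by simpa using hsub j)]
    simp
  have hdenom' : (derivative (blaschkeDenom a)).eval w = (blaschkeDenom a).eval w *
      ∑ j, -(starRingEnd ℂ) (a j) / (1 - (starRingEnd ℂ) (a j) * w) := by
    rw [blaschkeDenom, eval_derivative_prod _ _ (fun j _ => by simpa using hdenom j)]
    simp
  have hroot : (-1) ^ n * blaschke a w * (blaschkeDenom a).eval w = (blaschkeNum a).eval w := by
    have h := (eval_fiberPoly_eq_zero_iff ha hw.le).mpr rfl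
    rw [eval_fiberPoly] at h
    exact (sub_eq_zero.mp h).symm
  rw [fiberDeriv_eq, hnum', hdenom', ← mul_assoc, hroot, ← mul_sub, ← Finset.sum_sub_distrib,
    mul_left_comm, Finset.mul_sum, Complex.ofReal_sum]
  simp only [mul_logDeriv_blaschke_factor hw (hsub _)]

lemma fiberDeriv_ne_zero (ha : ∀ j, a j ∈ uDisk) (hn : 0 < n) {w : ℂ} (hw : ‖w‖ = 1) :
    fiberDeriv a w ≠ 0 := by
  have hpos : 0 < ∑ j, (1 - ‖a j‖ ^ 2) / ‖w - a j‖ ^ 2 := by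
    refine Finset.sum_pos (fun j _ => ?_) ⟨⟨0, hn⟩, Finset.mem_univ _⟩
    have hsub := norm_pos_iff.mpr (sub_ne_zero_of_one_le_norm (ha j) hw.ge)
    have haj : 0 < 1 - ‖a j‖ ^ 2 := by
      nlinarith [norm_nonneg (a j), norm_lt_one_of_mem_uDisk (ha j)]
    positivity
  refine right_ne_zero_of_mul (a := w) ?_
  rw [mul_fiberDeriv_eq ha hw]
  exact mul_ne_zero (eval_blaschkeNum_ne_zero ha hw.ge) (ofReal_ne_zero.mpr hpos.ne')

lemma exists_le_norm_fiberDeriv (ha : ∀ j, a j ∈ uDisk) (hn : 0 < n) :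
    ∃ δ > 0, ∃ β : ℝ, 0 ≤ β ∧ β < 1 ∧
      ∀ w ∈ uDisk, β < ‖blaschke a w‖ → δ ≤ ‖fiberDeriv a w‖ := by
  have hB := continuousOn_blaschke ha
  have hderiv : ContinuousOn (fiberDeriv a) (closedBall 0 1) := by
    rw [funext (fiberDeriv_eq a)]
    exact (derivative (blaschkeNum a)).continuous.continuousOn.sub
      ((continuousOn_const.mul hB).mul (derivative (blaschkeDenom a)).continuous.continuousOn)
  have hpos : ∀ w ∈ closedBall (0 : ℂ) 1, 0 < ‖fiberDeriv a w‖ ∨ 0 < 1 - ‖blaschke a w‖ := by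
    intro w hw
    rcases (mem_closedBall_zero_iff.mp hw).lt_or_eq with hlt | heq
    · exact .inr (sub_pos.mpr (norm_lt_one_of_mem_uDisk
        (mapsTo_blaschke ha hn (mem_ball_zero_iff.mpr hlt))))
    · exact .inl (norm_pos_iff.mpr (fiberDeriv_ne_zero ha hn heq))
  obtain ⟨c, hc, hbound⟩ := exists_pos_forall_le_or_le (isCompact_closedBall 0 1) hderiv.norm
    (by fun_prop) hpos
  have hmin := lt_min hc one_pos
  refine ⟨c, hc, 1 - min c 1 / 2, by linarith [min_le_right c 1], by linarith, fun w hw hb => ?_⟩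
  refine (hbound w (ball_subset_closedBall hw)).resolve_right fun h => ?_
  linarith [min_le_left c 1]

lemma exists_norm_le_of_norm_blaschke_le (ha : ∀ j, a j ∈ uDisk) {β : ℝ} (hβ : β < 1) :
    ∃ s : ℝ, 0 ≤ s ∧ s < 1 ∧ ∀ w ∈ uDisk, ‖blaschke a w‖ ≤ β → ‖w‖ ≤ s := by
  have hpos : ∀ w ∈ closedBall (0 : ℂ) 1, 0 < 1 - ‖w‖ ∨ 0 < ‖blaschke a w‖ - β := by
    intro w hw
    rcases (mem_closedBall_zero_iff.mp hw).lt_or_eq with hlt | heq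
    · exact .inl (sub_pos.mpr hlt)
    · exact .inr (by rw [norm_blaschke_of_norm_eq_one ha heq]; linarith)
  have hB := continuousOn_blaschke ha
  obtain ⟨c, hc, hbound⟩ := exists_pos_forall_le_or_le (isCompact_closedBall 0 1) (by fun_prop)
    (by fun_prop) hpos
  refine ⟨max 0 (1 - c), le_max_left _ _, max_lt one_pos (by linarith), fun w hw hb => ?_⟩
  refine le_max_of_le_right ?_
  rcases hbound w (ball_subset_closedBall hw) with h | h <;> linarith

end Fibers

/-! ### Coordinates of bounded functions over the Blaschke product -/

lemma norm_coeff_prod_X_sub_C_le {ι : Type*} {φ : ι → ℂ} (hφ : ∀ j, ‖φ j‖ ≤ 1) (s : Finset ι)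
    (i : ℕ) :
    ‖(∏ k ∈ s, (X - C (φ k))).coeff i‖ ≤ 2 ^ s.card := by
  induction s using Finset.induction_on generalizing i with
  | empty =>
    rw [Finset.prod_empty, coeff_one]
    split_ifs <;> simp
  | insert j s hj ih =>
    rw [Finset.prod_insert hj, Finset.card_insert_of_notMem hj, sub_mul, coeff_sub, coeff_C_mul,
      pow_succ, mul_two]
    refine (norm_sub_le _ _).trans (add_le_add ?_ ?_)
    · cases i with
      | zero => simp
      | succ i => rw [coeff_X_mul]; exact ih i
    · rw [norm_mul]
      exact (mul_le_of_le_one_left (norm_nonneg _) (hφ j)).trans (ih i)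

section Separation

variable {ι : Type*} [Fintype ι] [DecidableEq ι] {φ : ι → ℂ} {δ M : ℝ}

lemma injective_of_le_norm_prod_sub (hδ : 0 < δ)
    (hsep : ∀ j, δ ≤ ‖∏ k ∈ Finset.univ.erase j, (φ j - φ k)‖) : Function.Injective φ := by
  intro j k hjk
  by_contra hne
  have hzero : ∏ k ∈ Finset.univ.erase j, (φ j - φ k) = 0 :=
    Finset.prod_eq_zero (i := k) (by simp [Ne.symm hne]) (by rw [hjk, sub_self])
  have hle := hsep j
  rw [hzero, norm_zero] at hle
  exact hle.not_gt hδ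

lemma norm_coeff_lagrange_basis_le (hφ : ∀ j, ‖φ j‖ ≤ 1) (hδ : 0 < δ)
    (hsep : ∀ j, δ ≤ ‖∏ k ∈ Finset.univ.erase j, (φ j - φ k)‖) (j : ι) (i : ℕ) :
    ‖(Lagrange.basis Finset.univ φ j).coeff i‖ ≤ 2 ^ Fintype.card ι / δ := by
  have hbasis : Lagrange.basis Finset.univ φ j
      = C ((∏ k ∈ Finset.univ.erase j, (φ j - φ k))⁻¹) *
        ∏ k ∈ Finset.univ.erase j, (X - C (φ k)) := by
    simp only [Lagrange.basis, Lagrange.basisDivisor, Finset.prod_mul_distrib,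
      ← Finset.prod_inv_distrib, map_prod]
  rw [hbasis, coeff_C_mul, norm_mul, norm_inv, div_eq_inv_mul]
  have hcoeff : ‖(∏ k ∈ Finset.univ.erase j, (X - C (φ k))).coeff i‖ ≤ 2 ^ Fintype.card ι :=
    (norm_coeff_prod_X_sub_C_le hφ _ i).trans
      (pow_le_pow_right₀ one_le_two (Finset.card_le_univ _))
  exact mul_le_mul (inv_anti₀ hδ (hsep j)) hcoeff (norm_nonneg _) (by positivity)

lemma norm_coeff_le_of_norm_eval_le (hφ : ∀ j, ‖φ j‖ ≤ 1) (hδ : 0 < δ)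
    (hsep : ∀ j, δ ≤ ‖∏ k ∈ Finset.univ.erase j, (φ j - φ k)‖) {r : ℂ[X]}
    (hr : r.degree < Fintype.card ι) (hM : ∀ j, ‖r.eval (φ j)‖ ≤ M) (i : ℕ) :
    ‖r.coeff i‖ ≤ Fintype.card ι * (2 ^ Fintype.card ι / δ) * M := by
  have hinterpolate := Lagrange.eq_interpolate (s := Finset.univ) (v := φ)
    (injective_of_le_norm_prod_sub hδ hsep).injOn (f := r) hr
  have hterm : ∀ j : ι, ‖(C (r.eval (φ j)) * Lagrange.basis Finset.univ φ j).coeff i‖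
      ≤ (2 ^ Fintype.card ι / δ) * M := fun j => by
    rw [coeff_C_mul, norm_mul, mul_comm]
    exact mul_le_mul (norm_coeff_lagrange_basis_le hφ hδ hsep j i) (hM j) (norm_nonneg _)
      (by positivity)
  rw [hinterpolate, Lagrange.interpolate_apply, finsetSum_coeff]
  refine ((norm_sum_le _ _).trans (Finset.sum_le_sum fun j _ => hterm j)).trans_eq ?_
  rw [Finset.sum_const, Finset.card_univ, nsmul_eq_mul, mul_assoc]

end Separation

lemma eval_eq_sum_fin {R : Type*} [Semiring R] {n : ℕ} {r : R[X]} (hr : r.degree < n) (w : R) :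
    r.eval w = ∑ i : Fin n, r.coeff i * w ^ (i : ℕ) := by
  rw [← Finset.sum_range fun i => r.coeff i * w ^ i]
  rcases eq_or_ne r 0 with rfl | hr0
  · simp
  · exact eval_eq_sum_range' ((natDegree_lt_iff_degree_lt hr0).mpr hr) w

lemma X_mul_modByMonic_of_degree_lt {R : Type*} [CommRing R] {q r : R[X]} (hq : q.Monic)
    (hr : r.degree < q.degree) :
    X * r %ₘ q = X * r - C (r.coeff (q.natDegree - 1)) * q := by
  nontriviality R
  refine (div_modByMonic_unique (C (r.coeff (q.natDegree - 1))) _ hq ⟨by ring, ?_⟩).2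
  rw [degree_eq_natDegree hq.ne_zero, degree_lt_iff_coeff_zero] at *
  intro m hm
  rw [coeff_sub, coeff_C_mul]
  rcases m with _ | m
  · rw [hr (q.natDegree - 1) (by omega)]
    simp
  rw [coeff_X_mul]
  rcases hm.eq_or_lt with heq | hlt
  · rw [← heq, hq.coeff_natDegree, heq, Nat.add_sub_cancel, mul_one, sub_self]
  · rw [hr m (by omega), coeff_eq_zero_of_natDegree_lt hlt, mul_zero, sub_zero]

lemma differentiable_coeff_X_pow_modByMonic {q : ℂ → ℂ[X]} {d : ℕ} (hq : ∀ b, (q b).Monic)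
    (hd : ∀ b, (q b).natDegree = d) (hdiff : ∀ i, Differentiable ℂ fun b => (q b).coeff i)
    (k i : ℕ) : Differentiable ℂ fun b => (X ^ k %ₘ q b).coeff i := by
  induction k generalizing i with
  | zero =>
    rcases eq_or_ne d 0 with rfl | hd0
    · have hone : ∀ b, q b = 1 := fun b => eq_one_of_monic_natDegree_zero (hq b) (hd b)
      simp [hone]
    · have hone : ∀ b, (X ^ 0 : ℂ[X]) %ₘ q b = 1 := fun b => by
        rw [pow_zero, modByMonic_eq_self_iff (hq b), degree_one,
          degree_eq_natDegree (hq b).ne_zero, hd b]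
        exact_mod_cast Nat.pos_of_ne_zero hd0
      simp only [hone]
      exact differentiable_const _
  | succ k ih =>
    have hstep : ∀ b, X ^ (k + 1) %ₘ q b
        = X * (X ^ k %ₘ q b) - C ((X ^ k %ₘ q b).coeff (d - 1)) * q b := fun b => by
      rw [← hd b, ← X_mul_modByMonic_of_degree_lt (hq b) (degree_modByMonic_lt _ (hq b)),
        pow_succ', mul_modByMonic X (X ^ k), mul_modByMonic X (X ^ k %ₘ q b),
        (modByMonic_eq_self_iff (hq b)).mpr (degree_modByMonic_lt (X ^ k) (hq b))]
    simp only [hstep, coeff_sub, coeff_C_mul]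
    refine Differentiable.sub ?_ ((ih _).mul (hdiff i))
    cases i with
    | zero => simp
    | succ i => simpa only [coeff_X_mul] using ih i

section Coordinates

variable {n : ℕ} {a : Fin n → ℂ} {δ : ℝ} {b : ℂ} {φ : Fin n → ℂ} {c : ℕ → ℂ} {K : ℝ}

/-- `φ` enumerates the fibre of `B` over `b`, with multiplicity, and its points are separated in
the sense that the derivative of the fibre polynomial has modulus at least `δ` at each of them. -/
structure IsSeparatedFiber (a : Fin n → ℂ) (δ : ℝ) (b : ℂ) (φ : Fin n → ℂ) : Prop where
  fiberPoly_eq : fiberPoly a b = ∏ j, (X - C (φ j))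
  mem_uDisk : ∀ j, φ j ∈ uDisk
  blaschke_eq : ∀ j, blaschke a (φ j) = b
  le_norm_prod_sub : ∀ j, δ ≤ ‖∏ k ∈ Finset.univ.erase j, (φ j - φ k)‖

lemma exists_isSeparatedFiber (ha : ∀ j, a j ∈ uDisk) (h0 : ∃ j, a j = 0) :
    ∃ δ > 0, ∃ β : ℝ, 0 ≤ β ∧ β < 1 ∧
      ∀ b : ℂ, β < ‖b‖ → ‖b‖ < 1 → ∃ φ, IsSeparatedFiber a δ b φ := by
  obtain ⟨δ, hδ, β, hβ0, hβ1, hderiv⟩ := exists_le_norm_fiberDeriv ha h0.choose.pos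
  refine ⟨δ, hδ, β, hβ0, hβ1, fun b hb hb1 => ?_⟩
  obtain ⟨φ, hφ⟩ := exists_eq_prod_X_sub_C (monic_fiberPoly h0 b) (IsAlgClosed.splits _)
    (natDegree_fiberPoly h0 b)
  have hroot : ∀ j, (fiberPoly a b).eval (φ j) = 0 := fun j => by
    rw [hφ, eval_prod]
    exact Finset.prod_eq_zero (Finset.mem_univ j) (by simp)
  have hmem := fun j => mem_uDisk_of_eval_fiberPoly_eq_zero ha hb1 (hroot j)
  have hval := fun j =>
    (eval_fiberPoly_eq_zero_iff ha (norm_lt_one_of_mem_uDisk (hmem j)).le).mp (hroot j)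
  refine ⟨φ, hφ, hmem, hval, fun j => ?_⟩
  rw [← fiberDeriv_eq_prod_sub hφ j (hval j)]
  exact hderiv _ (hmem j) (by rwa [hval j])

lemma IsSeparatedFiber.norm_coeff_le (hφ : IsSeparatedFiber a δ b φ) (hδ : 0 < δ) {r : ℂ[X]}
    (hr : r.degree < n) {M : ℝ} (hM : ∀ j, ‖r.eval (φ j)‖ ≤ M) (i : ℕ) :
    ‖r.coeff i‖ ≤ n * (2 ^ n / δ) * M := by
  simpa only [Fintype.card_fin] using norm_coeff_le_of_norm_eval_le
    (fun j => (norm_lt_one_of_mem_uDisk (hφ.mem_uDisk j)).le) hδ hφ.le_norm_prod_sub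
    (by rwa [Fintype.card_fin]) hM i

lemma IsSeparatedFiber.norm_le_of_norm_sum_mul_pow_le (hφ : IsSeparatedFiber a δ b φ)
    (hδ : 0 < δ) {v : Fin n → ℂ} {M : ℝ} (hM : ∀ j, ‖∑ i, v i * φ j ^ (i : ℕ)‖ ≤ M) (i : Fin n) :
    ‖v i‖ ≤ n * (2 ^ n / δ) * M := by
  have hcoeff : ∀ i : Fin n, (ofFn n v).coeff i = v i := fun i =>
    ofFn_coeff_eq_val_of_lt v i.isLt
  rw [← hcoeff]
  refine hφ.norm_coeff_le hδ (ofFn_degree_lt v) (fun j => ?_) i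
  simpa only [eval_eq_sum_fin (ofFn_degree_lt v), hcoeff] using hM j

lemma eval_X_pow_modByMonic_fiberPoly (ha : ∀ j, a j ∈ uDisk) {w : ℂ} (hw : w ∈ uDisk) (k : ℕ) :
    (X ^ k %ₘ fiberPoly a (blaschke a w)).eval w = w ^ k := by
  have hroot := (eval_fiberPoly_eq_zero_iff ha (norm_lt_one_of_mem_uDisk hw).le).mpr rfl
  simpa using aeval_modByMonic_eq_self_of_root (p := X ^ k) hroot

lemma degree_modByMonic_fiberPoly_lt (h0 : ∃ j, a j = 0) (b : ℂ) (r : ℂ[X]) :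
    (r %ₘ fiberPoly a b).degree < n :=
  degree_fiberPoly h0 b ▸ degree_modByMonic_lt r (monic_fiberPoly h0 b)

lemma differentiable_coeff_X_pow_modByMonic_fiberPoly (h0 : ∃ j, a j = 0) (k i : ℕ) :
    Differentiable ℂ fun b => (X ^ k %ₘ fiberPoly a b).coeff i := by
  refine differentiable_coeff_X_pow_modByMonic (monic_fiberPoly h0) (natDegree_fiberPoly h0) ?_ k i
  intro i
  simp only [fiberPoly, coeff_sub, coeff_C_mul]
  fun_prop

/-- The bound is proved by interpolation on the circle `‖b‖ = β'`, for a radius `β'` near `1` at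
which the fibres are separated, and carried inside by the maximum principle. -/
lemma exists_norm_coeff_X_pow_modByMonic_le (ha : ∀ j, a j ∈ uDisk) (h0 : ∃ j, a j = 0) {β : ℝ}
    (hβ : β < 1) : ∃ L s : ℝ, 0 ≤ s ∧ s < 1 ∧ ∀ b : ℂ, ‖b‖ ≤ β → ∀ k i,
      ‖(X ^ k %ₘ fiberPoly a b).coeff i‖ ≤ L * s ^ k := by
  obtain ⟨δ, hδ, β₀, hβ₀, hβ₀1, hfiber⟩ := exists_isSeparatedFiber ha h0
  obtain ⟨β', hβ', hβ'1⟩ := exists_between (max_lt hβ₀1 hβ)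
  have hβ₀β' : β₀ < β' := (le_max_left _ _).trans_lt hβ'
  have hβ'0 : β' ≠ 0 := (hβ₀.trans_lt hβ₀β').ne'
  obtain ⟨s, hs0, hs1, hs⟩ := exists_norm_le_of_norm_blaschke_le ha hβ'1
  refine ⟨n * (2 ^ n / δ), s, hs0, hs1, fun b hb k i => ?_⟩
  refine norm_le_of_forall_mem_frontier_norm_le (U := ball (0 : ℂ) β') isBounded_ball
    (differentiable_coeff_X_pow_modByMonic_fiberPoly h0 k i).diffContOnCl (fun b hb => ?_) ?_
  · rw [frontier_ball _ hβ'0, mem_sphere_zero_iff_norm] at hb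
    obtain ⟨φ, hφ⟩ := hfiber b (by linarith) (by linarith)
    refine hφ.norm_coeff_le hδ (degree_modByMonic_fiberPoly_lt h0 b _) (fun j => ?_) i
    rw [← hφ.blaschke_eq j, eval_X_pow_modByMonic_fiberPoly ha (hφ.mem_uDisk j), norm_pow]
    exact pow_le_pow_left₀ (norm_nonneg _)
      (hs _ (hφ.mem_uDisk j) (by rw [hφ.blaschke_eq j, hb])) k
  · rw [closure_ball _ hβ'0, mem_closedBall_zero_iff]
    exact hb.trans ((le_max_right _ _).trans hβ'.le)

lemma exists_summable_norm_mul_coeff_le (ha : ∀ j, a j ∈ uDisk) (h0 : ∃ j, a j = 0)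
    (hc : ∀ k, ‖c k‖ ≤ K) {β : ℝ} (hβ : β < 1) :
    ∃ v : ℕ → ℝ, Summable v ∧ ∀ b : ℂ, ‖b‖ ≤ β → ∀ i k,
      ‖c k * (X ^ k %ₘ fiberPoly a b).coeff i‖ ≤ v k := by
  obtain ⟨L, s, hs0, hs1, hs⟩ := exists_norm_coeff_X_pow_modByMonic_le ha h0 hβ
  refine ⟨fun k => L * (‖c k‖ * s ^ k), (summable_mul_pow_of_bounded hc hs0 hs1).mul_left L,
    fun b hb i k => ?_⟩
  calc ‖c k * (X ^ k %ₘ fiberPoly a b).coeff i‖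
      = ‖c k‖ * ‖(X ^ k %ₘ fiberPoly a b).coeff i‖ := norm_mul _ _
    _ ≤ ‖c k‖ * (L * s ^ k) := by gcongr; exact hs b hb k i
    _ = L * (‖c k‖ * s ^ k) := by ring

/-- The `i`-th coordinate, as a function of `b = B z`, of `u = ∑ c_k z^k` in the expansion
`u(z) = ∑_{i < n} U_i(B z) z^i`, obtained by reducing each `z^k` modulo the fibre polynomial. -/
def fiberCoord (a : Fin n → ℂ) (c : ℕ → ℂ) (i : ℕ) (b : ℂ) : ℂ :=
  ∑' k, c k * (X ^ k %ₘ fiberPoly a b).coeff i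

lemma hasSum_fiberCoord (ha : ∀ j, a j ∈ uDisk) (h0 : ∃ j, a j = 0) (hc : ∀ k, ‖c k‖ ≤ K)
    (hb : b ∈ uDisk) (i : ℕ) :
    HasSum (fun k => c k * (X ^ k %ₘ fiberPoly a b).coeff i) (fiberCoord a c i b) := by
  obtain ⟨v, hv, hle⟩ :=
    exists_summable_norm_mul_coeff_le ha h0 hc (norm_lt_one_of_mem_uDisk hb)
  exact (Summable.of_norm_bounded hv (hle b le_rfl i)).hasSum

lemma differentiableOn_fiberCoord (ha : ∀ j, a j ∈ uDisk) (h0 : ∃ j, a j = 0)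
    (hc : ∀ k, ‖c k‖ ≤ K) (i : ℕ) : DifferentiableOn ℂ (fiberCoord a c i) uDisk := by
  intro b hb
  obtain ⟨β, hbβ, hβ⟩ := exists_between (norm_lt_one_of_mem_uDisk hb)
  obtain ⟨v, hv, hle⟩ := exists_summable_norm_mul_coeff_le ha h0 hc hβ
  have hball : DifferentiableOn ℂ (fiberCoord a c i) (ball 0 β) :=
    differentiableOn_tsum_of_summable_norm hv
      (fun k => ((differentiable_coeff_X_pow_modByMonic_fiberPoly h0 k i).const_mul
        (c k)).differentiableOn) isOpen_ball
      (fun k w hw => hle w (mem_ball_zero_iff.mp hw).le i k)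
  exact (hball.differentiableAt
    (isOpen_ball.mem_nhds (mem_ball_zero_iff.mpr hbβ))).differentiableWithinAt

lemma eq_sum_fiberCoord_mul_pow (ha : ∀ j, a j ∈ uDisk) (h0 : ∃ j, a j = 0)
    (hc : ∀ k, ‖c k‖ ≤ K) {u : ℂ → ℂ} (hu : ∀ z ∈ uDisk, HasSum (fun k => c k * z ^ k) (u z))
    {z : ℂ} (hz : z ∈ uDisk) :
    u z = ∑ i : Fin n, fiberCoord a c i (blaschke a z) * z ^ (i : ℕ) := by
  have hcoord := hasSum_sum (s := Finset.univ) fun (i : Fin n) _ =>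
    (hasSum_fiberCoord ha h0 hc (mapsTo_blaschke ha h0.choose.pos hz) i).mul_right (z ^ (i : ℕ))
  refine (hu z hz).unique (hcoord.congr_fun fun k => ?_)
  rw [← eval_X_pow_modByMonic_fiberPoly ha hz k,
    eval_eq_sum_fin (degree_modByMonic_fiberPoly_lt h0 _ _), Finset.mul_sum]
  exact Finset.sum_congr rfl fun i _ => (mul_assoc _ _ _).symm

lemma exists_memHinf_eq_sum_mul_pow (ha : ∀ j, a j ∈ uDisk) (h0 : ∃ j, a j = 0) {u : ℂ → ℂ}
    (hu : MemHinf u) : ∃ U : Fin n → ℂ → ℂ, (∀ i, MemHinf (U i)) ∧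
      ∀ z ∈ uDisk, u z = ∑ i, U i (blaschke a z) * z ^ (i : ℕ) := by
  obtain ⟨hdiff, M, hM⟩ := hu
  obtain ⟨c, hc⟩ := exists_hasSum_pow_of_differentiableOn hdiff
  obtain ⟨K, hK⟩ := exists_norm_le_of_summable_sq (summable_of_sum_range_le
    (fun _ => by positivity) (sum_sq_le_of_hasSum_of_bounded hc hM))
  obtain ⟨δ, hδ, β, -, hβ1, hfiber⟩ := exists_isSeparatedFiber ha h0
  have hU := differentiableOn_fiberCoord ha h0 hK
  have hsum := fun z hz => eq_sum_fiberCoord_mul_pow ha h0 hK hc (z := z) hz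
  refine ⟨fun i => fiberCoord a c i, fun i => ⟨hU i, ?_⟩, hsum⟩
  obtain ⟨L, hL⟩ := (isCompact_closedBall (0 : ℂ) β).exists_bound_of_continuousOn
    ((hU i).continuousOn.mono (closedBall_subset_ball hβ1))
  refine ⟨max L (n * (2 ^ n / δ) * M), fun b hb => ?_⟩
  rcases le_or_gt ‖b‖ β with hle | hlt
  · exact le_max_of_le_left (hL b (mem_closedBall_zero_iff.mpr hle))
  obtain ⟨φ, hφ⟩ := hfiber b hlt (norm_lt_one_of_mem_uDisk hb)
  refine le_max_of_le_right (hφ.norm_le_of_norm_sum_mul_pow_le hδ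
    (v := fun i => fiberCoord a c i b) (fun j => ?_) i)
  have hj := hsum _ (hφ.mem_uDisk j)
  rw [hφ.blaschke_eq j] at hj
  exact hj ▸ hM _ (hφ.mem_uDisk j)

end Coordinates

/-! ### The adjugate identity -/

section Adjugate

variable {R : Type*} [CommRing R] {n : ℕ} {φ : Fin n → R}

lemma vandermonde_mulVec_apply (φ c : Fin n → R) (j : Fin n) :
    (Matrix.vandermonde φ).mulVec c j = ∑ k, c k * φ j ^ (k : ℕ) := by
  simp only [Matrix.mulVec, dotProduct, Matrix.vandermonde_apply, mul_comm]

lemma vandermonde_mul_scalar_sub {γ : Fin n → R} {M : Matrix (Fin n) (Fin n) R}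
    (hM : ∀ j (i : Fin n), γ j * φ j ^ (i : ℕ) = ∑ k, M k i * φ j ^ (k : ℕ)) (x : R) :
    Matrix.vandermonde φ * (Matrix.scalar (Fin n) x - M)
      = Matrix.diagonal (fun j => x - γ j) * Matrix.vandermonde φ := by
  ext j i
  rw [Matrix.diagonal_mul, Matrix.mul_sub, Matrix.sub_apply, Matrix.scalar_apply,
    Matrix.mul_diagonal, Matrix.mul_apply]
  simp only [Matrix.vandermonde_apply]
  rw [sub_mul, hM j i, mul_comm]
  simp only [mul_comm]

lemma adjugate_diagonal_sub_mulVec (γ η : Fin n → R) (j₀ : Fin n) :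
    (Matrix.diagonal fun j => γ j₀ - γ j).adjugate.mulVec η
      = Pi.single j₀ ((∏ k ∈ Finset.univ.erase j₀, (γ j₀ - γ k)) * η j₀) := by
  ext j
  rw [Matrix.adjugate_diagonal, Matrix.mulVec_diagonal]
  rcases eq_or_ne j j₀ with rfl | hj
  · rw [Pi.single_eq_same]
  · rw [Pi.single_eq_of_ne hj, Finset.prod_eq_zero (i := j₀) (by simp [Ne.symm hj]) (sub_self _),
      zero_mul]

/-- Cramer's rule for the coefficients of `∏_{k ≠ j₀} (X - φ_k)`, whose leading coefficient is `1`
and which vanishes at every node except `φ_{j₀}`. -/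
lemma det_vandermonde_eq_adjugate_mul_prod [Nontrivial R] (φ : Fin n → R) (j₀ : Fin n)
    {i₀ : Fin n} (hi₀ : (i₀ : ℕ) = n - 1) :
    (Matrix.vandermonde φ).det
      = (Matrix.vandermonde φ).adjugate i₀ j₀ * ∏ k ∈ Finset.univ.erase j₀, (φ j₀ - φ k) := by
  set V := Matrix.vandermonde φ
  set q : R[X] := ∏ k ∈ Finset.univ.erase j₀, (X - C (φ k))
  have hq : q.Monic := monic_prod_X_sub_C φ _
  have hnatDegree : q.natDegree = n - 1 := by
    rw [natDegree_prod_of_monic _ _ fun k _ => monic_X_sub_C _]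
    simp
  have hdegree : q.degree < n := by
    rw [degree_eq_natDegree hq.ne_zero, hnatDegree]
    exact_mod_cast Nat.sub_lt j₀.pos one_pos
  have hnodes : V.mulVec (fun i => q.coeff i)
      = Pi.single j₀ (∏ k ∈ Finset.univ.erase j₀, (φ j₀ - φ k)) := by
    ext j
    rw [vandermonde_mulVec_apply, ← eval_eq_sum_fin hdegree, eval_prod]
    simp only [eval_sub, eval_X, eval_C]
    rcases eq_or_ne j j₀ with rfl | hj
    · rw [Pi.single_eq_same]
    · rw [Pi.single_eq_of_ne hj, Finset.prod_eq_zero (i := j) (by simp [hj]) (sub_self _)]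
  have hcramer : V.det • (fun i : Fin n => q.coeff i)
      = V.adjugate.mulVec (Pi.single j₀ (∏ k ∈ Finset.univ.erase j₀, (φ j₀ - φ k))) := by
    rw [← hnodes, Matrix.mulVec_mulVec, Matrix.adjugate_mul, Matrix.smul_mulVec, Matrix.one_mulVec]
  have hlast := congrFun hcramer i₀
  rw [Pi.smul_apply, smul_eq_mul, hi₀, ← hnatDegree, hq.coeff_natDegree, mul_one,
    Matrix.mulVec_single] at hlast
  simpa [Matrix.col] using hlast

/-- Here `M` is the matrix of multiplication by `γ`, and `c` the coordinate vector of `η`, with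
respect to the basis `1, X, …, X^{n-1}` of functions on the nodes `φ`. The Vandermonde matrix
diagonalises `M`, so only the `j₀`-th entry survives in `adj (γ_{j₀} - M) c`. -/
lemma prod_sub_mul_adjugate_mulVec_eq [IsDomain R] (hφ : Function.Injective φ) {γ η c : Fin n → R}
    {M : Matrix (Fin n) (Fin n) R}
    (hM : ∀ j (i : Fin n), γ j * φ j ^ (i : ℕ) = ∑ k, M k i * φ j ^ (k : ℕ))
    (hc : ∀ j, η j = ∑ k, c k * φ j ^ (k : ℕ)) (j₀ : Fin n) {i₀ : Fin n}
    (hi₀ : (i₀ : ℕ) = n - 1) :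
    (∏ k ∈ Finset.univ.erase j₀, (φ j₀ - φ k)) *
        (Matrix.scalar (Fin n) (γ j₀) - M).adjugate.mulVec c i₀
      = (∏ k ∈ Finset.univ.erase j₀, (γ j₀ - γ k)) * η j₀ := by
  set V := Matrix.vandermonde φ
  set N := Matrix.scalar (Fin n) (γ j₀) - M
  have hdet : V.det ≠ 0 := Matrix.det_vandermonde_ne_zero_iff.mpr hφ
  have hη : V.mulVec c = η := funext fun j => by rw [vandermonde_mulVec_apply, hc j]
  have hadj : N.adjugate * V.adjugate
      = V.adjugate * (Matrix.diagonal fun j => γ j₀ - γ j).adjugate := by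
    rw [← Matrix.adjugate_mul_distrib, vandermonde_mul_scalar_sub hM, Matrix.adjugate_mul_distrib]
  have hvec : V.det • N.adjugate.mulVec c = V.adjugate.mulVec
      (Pi.single j₀ ((∏ k ∈ Finset.univ.erase j₀, (γ j₀ - γ k)) * η j₀)) := by
    rw [← adjugate_diagonal_sub_mulVec, ← hη, Matrix.mulVec_mulVec, ← hadj, Matrix.mulVec_mulVec,
      Matrix.mul_assoc, Matrix.adjugate_mul, Matrix.mul_smul, Matrix.mul_one, Matrix.smul_mulVec]
  have hentry := congrFun hvec i₀
  simp only [Pi.smul_apply, smul_eq_mul, Matrix.mulVec_single, Matrix.col, Matrix.transpose_apply,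
    MulOpposite.smul_eq_mul_unop, MulOpposite.unop_op] at hentry
  refine mul_left_cancel₀ hdet ?_
  linear_combination (∏ k ∈ Finset.univ.erase j₀, (φ j₀ - φ k)) * hentry -
    (∏ k ∈ Finset.univ.erase j₀, (γ j₀ - γ k)) * η j₀ *
      det_vandermonde_eq_adjugate_mul_prod φ j₀ hi₀

lemma coe_adjugate_scalar_sub_mulVec_apply {X m : Type*} [Fintype m] [DecidableEq m]
    {𝒜 : Subalgebra R (X → R)} (g : 𝒜) (M : Matrix m m 𝒜) (c : m → 𝒜) (i : m) (x : X) :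
    ((Matrix.scalar m g - M).adjugate.mulVec c i : X → R) x
      = (Matrix.scalar m ((g : X → R) x) -
          Matrix.of fun k l => (M k l : X → R) x).adjugate.mulVec (fun k => (c k : X → R) x) i := by
  let ev : 𝒜 →+* R := (Pi.evalRingHom (fun _ : X => R) x).comp 𝒜.val.toRingHom
  have hscalar : ev.mapMatrix (Matrix.scalar m g) = Matrix.scalar m (ev g) := by
    ext k l
    simp [Matrix.diagonal_apply, apply_ite ev]
  calc ev ((Matrix.scalar m g - M).adjugate.mulVec c i)
      = (ev.mapMatrix (Matrix.scalar m g - M).adjugate).mulVec (ev ∘ c) i := ev.map_mulVec _ _ _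
    _ = (Matrix.scalar m (ev g) - ev.mapMatrix M).adjugate.mulVec (ev ∘ c) i := by
      rw [ev.map_adjugate, map_sub, hscalar]

end Adjugate

/-! ### Multiples of `Γ(g)` as bounded limits -/

section Gamma

variable {n : ℕ} {a : Fin n → ℂ} {δ β : ℝ} {z : ℂ} {φ : Fin n → ℂ}

lemma IsSeparatedFiber.exists_eq (hφ : IsSeparatedFiber a δ (blaschke a z) φ)
    (ha : ∀ j, a j ∈ uDisk) (hz : z ∈ uDisk) : ∃ j, φ j = z := by
  have hroot := (eval_fiberPoly_eq_zero_iff ha (norm_lt_one_of_mem_uDisk hz).le).mpr rfl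
  rw [hφ.fiberPoly_eq, eval_prod] at hroot
  obtain ⟨j, -, hj⟩ := Finset.prod_eq_zero_iff.mp hroot
  rw [eval_sub, eval_X, eval_C] at hj
  exact ⟨j, (sub_eq_zero.mp hj).symm⟩

lemma IsSeparatedFiber.calD_eq_prod {j₀ : Fin n}
    (hφ : IsSeparatedFiber a δ (blaschke a (φ j₀)) φ) (f : ℂ → ℂ) :
    calD a f (φ j₀) = ∏ k ∈ Finset.univ.erase j₀, (f (φ j₀) - f (φ k)) := by
  have hroots : fiberMS a (φ j₀) = Finset.univ.val.map φ := by
    have hprod : ∏ j, (X - C (φ j)) = ((Finset.univ.val.map φ).map fun w => X - C w).prod := by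
      rw [Multiset.map_map]
      rfl
    rw [fiberMS_eq_roots_fiberPoly, hφ.fiberPoly_eq, hprod, roots_multiset_prod_X_sub_C]
  have herase : (fiberMS a (φ j₀)).erase (φ j₀) = (Finset.univ.erase j₀).val.map φ := by
    rw [hroots, ← Multiset.cons_erase (Finset.mem_univ_val j₀), Multiset.map_cons,
      Multiset.erase_cons_head, Finset.erase_val]
  rw [calD, herase, Multiset.map_map]
  rfl

lemma IsSeparatedFiber.adjugate_mulVec_eq_gamma_mul
    (hφ : IsSeparatedFiber a δ (blaschke a z) φ) (hδ : 0 < δ) (ha : ∀ j, a j ∈ uDisk)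
    (hz : z ∈ uDisk) {g Γg h : ℂ → ℂ} (hΓ : IsGamma a g Γg) {G : Fin n → Fin n → ℂ → ℂ}
    (hG : ∀ i : Fin n, ∀ w ∈ uDisk, g w * w ^ (i : ℕ) = ∑ k, G i k (blaschke a w) * w ^ (k : ℕ))
    {U : Fin n → ℂ → ℂ} (hU : ∀ w ∈ uDisk, h w = ∑ k, U k (blaschke a w) * w ^ (k : ℕ))
    {i₀ : Fin n} (hi₀ : (i₀ : ℕ) = n - 1) :
    (Matrix.scalar (Fin n) (g z) - Matrix.of fun k i => G i k (blaschke a z)).adjugate.mulVec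
      (fun k => U k (blaschke a z)) i₀ = Γg z * h z := by
  obtain ⟨j₀, rfl⟩ := hφ.exists_eq ha hz
  have hcoord := prod_sub_mul_adjugate_mulVec_eq (γ := fun j => g (φ j)) (η := fun j => h (φ j))
    (c := fun k => U k (blaschke a (φ j₀))) (M := Matrix.of fun k i => G i k (blaschke a (φ j₀)))
    (injective_of_le_norm_prod_sub hδ hφ.le_norm_prod_sub)
    (fun j i => hφ.blaschke_eq j ▸ hG i _ (hφ.mem_uDisk j))
    (fun j => hφ.blaschke_eq j ▸ hU _ (hφ.mem_uDisk j)) j₀ hi₀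
  have hprod : ∏ k ∈ Finset.univ.erase j₀, (φ j₀ - φ k) ≠ 0 :=
    norm_pos_iff.mp (hδ.trans_le (hφ.le_norm_prod_sub j₀))
  have hgamma := hΓ.2 _ hz
  simp only [hφ.calD_eq_prod, id] at hgamma
  refine mul_left_cancel₀ hprod ?_
  rw [hcoord, ← hgamma]
  ring

lemma eqOn_uDisk_of_eq_of_lt_norm_blaschke (ha : ∀ j, a j ∈ uDisk) (hβ : β < 1) {F G : ℂ → ℂ}
    (hF : DifferentiableOn ℂ F uDisk) (hG : DifferentiableOn ℂ G uDisk)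
    (hFG : ∀ z ∈ uDisk, β < ‖blaschke a z‖ → F z = G z) : EqOn F G uDisk := by
  have hopen : IsOpen uDisk := isOpen_ball
  obtain ⟨s, hs0, hs1, hs⟩ := exists_norm_le_of_norm_blaschke_le ha hβ
  obtain ⟨t, hst, ht1⟩ := exists_between hs1
  have hnorm : ‖(t : ℂ)‖ = t := Complex.norm_of_nonneg (hs0.trans hst.le)
  have ht : (t : ℂ) ∈ uDisk := by rwa [uDisk, mem_ball_zero_iff, hnorm]
  have hst' : s < ‖(t : ℂ)‖ := by rwa [hnorm]
  have hlt : ∀ᶠ z in 𝓝 (t : ℂ), s < ‖z‖ :=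
    continuous_norm.continuousAt.eventually (lt_mem_nhds hst')
  have heq : F =ᶠ[𝓝 (t : ℂ)] G := by
    filter_upwards [hopen.mem_nhds ht, hlt] with z hz hsz
    exact hFG z hz (lt_of_not_ge fun hle => (hs z hz hle).not_gt hsz)
  exact (hF.analyticOnNhd hopen).eqOn_of_preconnected_of_eventuallyEq (hG.analyticOnNhd hopen)
    (convex_ball (0 : ℂ) 1).isPreconnected ht heq

lemma memHinf_pow (i : ℕ) : MemHinf fun z => z ^ i :=
  ⟨(differentiable_pow i).differentiableOn, 1, fun z hz => by
    rw [norm_pow]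
    exact pow_le_one₀ (norm_nonneg z) (norm_lt_one_of_mem_uDisk hz).le⟩

lemma gamma_mul_mem_boundedLimits (ha : ∀ j, a j ∈ uDisk) (h0 : ∃ j, a j = 0) {g Γg h : ℂ → ℂ}
    (hg : MemHinf g) (hΓ : IsGamma a g Γg) (hh : MemHinf h) {A : Subalgebra ℂ (ℂ → ℂ)}
    (hBA : blaschke a ∈ A) (hgA : g ∈ A) : (fun z => Γg z * h z) ∈ boundedLimits A := by
  have hn : 0 < n := h0.choose.pos
  obtain ⟨δ, hδ, β, -, hβ1, hfiber⟩ := exists_isSeparatedFiber ha h0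
  obtain ⟨U, hU, hUh⟩ := exists_memHinf_eq_sum_mul_pow ha h0 hh
  choose G hG hGg using fun i : Fin n =>
    exists_memHinf_eq_sum_mul_pow ha h0 (hg.mul (memHinf_pow i))
  have hcomp : ∀ {f : ℂ → ℂ}, MemHinf f → (fun z => f (blaschke a z)) ∈ boundedLimits A :=
    fun hf => IsBoundedLimit.comp hf (differentiableOn_blaschke ha) (mapsTo_blaschke ha hn)
      (blaschke_zero h0) hBA
  let g' : boundedLimits A := ⟨g, IsBoundedLimit.of_mem hg hgA⟩
  let M : Matrix (Fin n) (Fin n) (boundedLimits A) := Matrix.of fun k i => ⟨_, hcomp (hG i k)⟩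
  let c : Fin n → boundedLimits A := fun k => ⟨_, hcomp (hU k)⟩
  let i₀ : Fin n := ⟨n - 1, Nat.sub_lt hn one_pos⟩
  let S : boundedLimits A := (Matrix.scalar (Fin n) g' - M).adjugate.mulVec c i₀
  have hS : IsBoundedLimit A (S : ℂ → ℂ) := S.2
  have hnear : ∀ z ∈ uDisk, β < ‖blaschke a z‖ → (S : ℂ → ℂ) z = Γg z * h z := by
    intro z hz hz'
    obtain ⟨φ, hφ⟩ :=
      hfiber _ hz' (norm_lt_one_of_mem_uDisk (mapsTo_blaschke ha hn hz))
    exact (coe_adjugate_scalar_sub_mulVec_apply g' M c i₀ z).trans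
      (hφ.adjugate_mulVec_eq_gamma_mul hδ ha hz hΓ hGg hUh rfl)
  exact hS.congr
    (eqOn_uDisk_of_eq_of_lt_norm_blaschke ha hβ1 hS.1.1 (hΓ.1.mul hh.1) hnear).symm

lemma memHinf_gamma (ha : ∀ j, a j ∈ uDisk) (h0 : ∃ j, a j = 0) {g Γg : ℂ → ℂ}
    (hg : MemHinf g) (hΓ : IsGamma a g Γg) : MemHinf Γg := by
  have hlim : IsBoundedLimit ⊤ fun z => Γg z * 1 :=
    gamma_mul_mem_boundedLimits ha h0 hg hΓ (MemHinf.const 1) trivial trivial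
  simpa only [mul_one] using hlim.1

end Gamma

/-- For `g ∈ H^∞` and every `p > 0`, the `H^p`-closure of `ℂ[B,g]`
contains the `z`-invariant subspace `Γ(g)·H^p`. -/
theorem stmt8 {n : ℕ} (hn : 2 ≤ n) (a : Fin n → ℂ) (ha : ∀ j, a j ∈ uDisk)
    (ha0 : a ⟨0, by omega⟩ = 0)
    (g Γg : ℂ → ℂ) (hg : MemHinf g) (hΓg : IsGamma a g Γg)
    (p : ℝ) (hp : 0 < p)
    (h : ℂ → ℂ) (hh : MemHp p h) :
    (fun z => Γg z * h z) ∈ hpClosure p (algGen2 (blaschke a) g) := by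
  have h0 : ∃ j, a j = 0 := ⟨_, ha0⟩
  rw [← coe_adjoin_pair_eq_algGen2]
  refine mul_mem_hpClosure_of_forall_memHinf hp (memHinf_gamma ha h0 hg hΓg) (fun v hv => ?_) hh
  exact gamma_mul_mem_boundedLimits ha h0 hg hΓg hv
    (Algebra.subset_adjoin (by simp)) (Algebra.subset_adjoin (by simp))
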